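/- arXiv:2108.12077 — 4 statements merged into one kernel-verified Lean document; each statement's English description precedes it below -/
import Mathlib

section
/- There are positive constants c and C such that for every integer m: c · (|m|+1)^{1/4} ≤ |Σ_{k=0}^∞ Γ_k^m α_{|m|+2k}^m P_{|m|+2k}^{|m|}(0)| ≤ C · (|m|+1)^{1/4}; in particular this sum is nonzero for every m. -/
noncomputable section

open MeasureTheory Real Filter

/-- The Legendre polynomial of degree `n`, via Rodrigues' formula. -/
def legendreP (n : ℕ) : Polynomial ℝ :=
  Polynomial.C ((2 ^ n * n.factorial : ℝ)⁻¹) *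
    Polynomial.derivative^[n] ((Polynomial.X ^ 2 - 1) ^ n)

/-- The associated Legendre function `P_l^m` (with Condon–Shortley phase),
so that `P_{|m|+2k}^{|m|}(0) = (-1)^{|m|+k} (2|m|+2k-1)!!/(2k)!!`. -/
def assocLegendre (l m : ℕ) (x : ℝ) : ℝ :=
  (-1 : ℝ) ^ m * (1 - x ^ 2) ^ ((m : ℝ) / 2) *
    (Polynomial.derivative^[m] (legendreP l)).eval x

/-- The normalizing constant `α_l^m` of the spherical harmonics. -/
def alphaY (l : ℕ) (m : ℤ) : ℝ :=
  (-1 : ℝ) ^ ((m + |m|) / 2) *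
    Real.sqrt ((2 * l + 1) * (l - m.natAbs).factorial /
      (4 * Real.pi * (l + m.natAbs).factorial))

/-- The spherical harmonic `Y_l^m` in latitude/longitude coordinates `(θ, φ)`. -/
def Ylm (l : ℕ) (m : ℤ) (θ φ : ℝ) : ℂ :=
  ((alphaY l m * assocLegendre l m.natAbs (Real.sin θ) : ℝ) : ℂ) *
    Complex.exp (Complex.I * m * φ)

/-- The surface measure `dS = cos θ dθ dφ` of the unit sphere, in the coordinate box
`[-π/2, π/2] × [-π, π)`. -/
def sphereMeasure : Measure (ℝ × ℝ) :=
  ((volume : Measure (ℝ × ℝ)).restrict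
      (Set.Icc (-(Real.pi / 2)) (Real.pi / 2) ×ˢ Set.Ico (-Real.pi) Real.pi)).withDensity
    fun p => ENNReal.ofReal (Real.cos p.1)

/-- The Fourier–Laplace coefficient `ψ̂_l^m = ∫_𝕊 ψ conj(Y_l^m) dS`. -/
def flCoeff (ψ : ℝ → ℝ → ℂ) (l : ℕ) (m : ℤ) : ℂ :=
  ∫ p : ℝ × ℝ, ψ p.1 p.2 * (starRingEnd ℂ) (Ylm l m p.1 p.2) ∂sphereMeasure

/-- Membership in the fractional Sobolev space `H^s(𝕊)`:
`ψ ∈ L²(𝕊)` and `Σ_{l,m} (l+1)^{2s} |ψ̂_l^m|² < ∞`.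
(The coefficients with `|m| > l` vanish automatically.) -/
def MemHs (s : ℝ) (ψ : ℝ → ℝ → ℂ) : Prop :=
  MeasureTheory.MemLp (fun p : ℝ × ℝ => ψ p.1 p.2) 2 sphereMeasure ∧
    Summable fun p : ℕ × ℤ =>
      ((p.1 : ℝ) + 1) ^ (2 * s) * ‖flCoeff ψ p.1 p.2‖ ^ 2

/-- The `H^s(𝕊)` norm. -/
def HsNorm (s : ℝ) (ψ : ℝ → ℝ → ℂ) : ℝ :=
  Real.sqrt (∑' p : ℕ × ℤ, ((p.1 : ℝ) + 1) ^ (2 * s) * ‖flCoeff ψ p.1 p.2‖ ^ 2)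

/-- Axially symmetric functions on the sphere: functions not depending on the longitude. -/
def Axial (ψ : ℝ → ℝ → ℂ) : Prop := ∀ θ φ₁ φ₂, ψ θ φ₁ = ψ θ φ₂

/-- Spherical (latitude/longitude) coordinates on the unit sphere of `ℝ³`. -/
def sphCoord (θ φ : ℝ) : EuclideanSpace ℝ (Fin 3) :=
  (WithLp.equiv 2 (Fin 3 → ℝ)).symm
    ![Real.cos θ * Real.cos φ, Real.cos θ * Real.sin φ, Real.sin θ]

/-- The open exterior `Ω` of the unit sphere. -/
def extDomain : Set (EuclideanSpace ℝ (Fin 3)) := {x | 1 < ‖x‖}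

/-- The closed exterior `cl Ω` of the unit sphere. -/
def closedExt : Set (EuclideanSpace ℝ (Fin 3)) := {x | 1 ≤ ‖x‖}

/-- The Laplacian of a function on `ℝ³`. -/
def lap {F : Type*} [NormedAddCommGroup F] [NormedSpace ℝ F]
    (u : EuclideanSpace ℝ (Fin 3) → F) (x : EuclideanSpace ℝ (Fin 3)) : F :=
  ∑ i : Fin 3, fderiv ℝ (fun y => fderiv ℝ u y (EuclideanSpace.single i 1)) x
    (EuclideanSpace.single i 1)

/-- The radial derivative `u_r` at a point of the unit sphere (taken from outside). -/
def radialDeriv {F : Type*} [NormedAddCommGroup F] [NormedSpace ℝ F]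
    (u : EuclideanSpace ℝ (Fin 3) → F) (θ φ : ℝ) : F :=
  derivWithin (fun r : ℝ => u (r • sphCoord θ φ)) (Set.Ici 1) 1

/-- The latitudinal derivative `u_θ` at a point of the unit sphere. -/
def thetaDeriv {F : Type*} [NormedAddCommGroup F] [NormedSpace ℝ F]
    (u : EuclideanSpace ℝ (Fin 3) → F) (θ φ : ℝ) : F :=
  deriv (fun t => u (sphCoord t φ)) θ

/-- The boundary trace on the unit sphere of a real-valued function, in coordinates. -/
def traceR (u : EuclideanSpace ℝ (Fin 3) → ℝ) (θ φ : ℝ) : ℂ := (u (sphCoord θ φ) : ℂ)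

/-- The boundary trace on the unit sphere of a complex-valued function, in coordinates. -/
def traceC (u : EuclideanSpace ℝ (Fin 3) → ℂ) (θ φ : ℝ) : ℂ := u (sphCoord θ φ)

/-- The Fourier coefficient on the equator `ℰ`. -/
def equatorCoeff (h : ℝ → ℂ) (m : ℤ) : ℂ :=
  (1 / (2 * Real.pi)) * ∫ φ in (-Real.pi)..Real.pi, h φ * Complex.exp (-(Complex.I * m * φ))

/-- Membership in the fractional Sobolev space `H^s(ℰ)` on the equator. -/
def MemHsE (s : ℝ) (h : ℝ → ℂ) : Prop :=
  MeasureTheory.MemLp h 2 (volume.restrict (Set.Ico (-Real.pi) Real.pi)) ∧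
    Summable fun m : ℤ => ((m.natAbs : ℝ) + 1) ^ (2 * s) * ‖equatorCoeff h m‖ ^ 2

/-- The `H^s(ℰ)` norm. -/
def HsNormE (s : ℝ) (h : ℝ → ℂ) : ℝ :=
  Real.sqrt (∑' m : ℤ, ((m.natAbs : ℝ) + 1) ^ (2 * s) * ‖equatorCoeff h m‖ ^ 2)

/-- The constant `β_l^m`. -/
def betaLM (l : ℕ) (m : ℤ) : ℝ :=
  Real.sqrt (((l : ℝ) - m.natAbs) * ((l : ℝ) + m.natAbs) /
    ((2 * (l : ℝ) - 1) * (2 * (l : ℝ) + 1)))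

/-- The constant `γ_l^m = -(l+1)β_l^m / (3(l+2)β_{l+1}^m)`. -/
def gammaLM (l : ℕ) (m : ℤ) : ℝ :=
  -(((l : ℝ) + 1) * betaLM l m) / (3 * ((l : ℝ) + 2) * betaLM (l + 1) m)

/-- The product `Γ_k^m = ∏_{j=1}^k γ_{|m|+2j-1}^m` (with `Γ_0^m = 1`). -/
def GammaKM (m : ℤ) (k : ℕ) : ℝ :=
  ∏ j ∈ Finset.Icc 1 k, gammaLM (m.natAbs + 2 * j - 1) m

/-- The value `α_{|m|+2k}^m P_{|m|+2k}^{|m|}(0)`. -/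
def PzeroM (m : ℤ) (k : ℕ) : ℝ :=
  alphaY (m.natAbs + 2 * k) m * assocLegendre (m.natAbs + 2 * k) m.natAbs 0

/-- The coefficient `a_l^m = f̂_l^m / (6(l+2)β_{l+1}^m)`. -/
def aCoef (f : ℝ → ℝ → ℂ) (l : ℕ) (m : ℤ) : ℂ :=
  flCoeff f l m / ((6 * ((l : ℝ) + 2) * betaLM (l + 1) m : ℝ) : ℂ)

/-- The solution of the recurrence `b_{|m|-1}^m = b_{|m|}^m = 0`,
`b_{l+1}^m = γ_l^m b_{l-1}^m + a_l^m`; here `bSeq f m n = b_{|m|-1+n}^m`. -/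
def bSeq (f : ℝ → ℝ → ℂ) (m : ℤ) : ℕ → ℂ
  | 0 => 0
  | 1 => 0
  | n + 2 => ((gammaLM (m.natAbs + n) m : ℝ) : ℂ) * bSeq f m n + aCoef f (m.natAbs + n) m

/-- The coefficient `b_l^m`. -/
def bCoef (f : ℝ → ℝ → ℂ) (l : ℕ) (m : ℤ) : ℂ := bSeq f m (l + 1 - m.natAbs)

/-- The constant `ã^m`. -/
def aTilde (f : ℝ → ℝ → ℂ) (h : ℝ → ℂ) (m : ℤ) : ℂ :=
  (equatorCoeff h m - ∑' k : ℕ, bCoef f (m.natAbs + 2 * k) m * ((PzeroM m k : ℝ) : ℂ)) /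
    (((∑' k : ℕ, GammaKM m k * PzeroM m k : ℝ)) : ℂ)

/-- The coefficient `c_l^m`: `c_{|m|+2k}^m = Γ_k^m ã^m` and `c_{|m|+2k-1}^m = 0`. -/
def cCoef (f : ℝ → ℝ → ℂ) (h : ℝ → ℂ) (l : ℕ) (m : ℤ) : ℂ :=
  if m.natAbs ≤ l ∧ (l - m.natAbs) % 2 = 0 then
    ((GammaKM m ((l - m.natAbs) / 2) : ℝ) : ℂ) * aTilde f h m
  else 0

/-- The boundary trace `v(1, θ, φ)` of the formal series solution. -/
def vTraceS (f : ℝ → ℝ → ℂ) (h : ℝ → ℂ) (θ φ : ℝ) : ℂ :=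
  ∑' p : ℕ × ℤ, (bCoef f p.1 p.2 + cCoef f h p.1 p.2) * Ylm p.1 p.2 θ φ

/-- The latitude of a point of `ℝ³`. -/
def latitude (x : EuclideanSpace ℝ (Fin 3)) : ℝ := Real.arcsin (x 2 / ‖x‖)

/-- The longitude of a point of `ℝ³`. -/
def longitude (x : EuclideanSpace ℝ (Fin 3)) : ℝ :=
  Complex.arg ((x 0 : ℂ) + (x 1 : ℂ) * Complex.I)

/-- The formal series solution `v = Σ (b_l^m + c_l^m) r^{-l-1} Y_l^m(θ, φ)`. -/
def vFun (f : ℝ → ℝ → ℂ) (h : ℝ → ℂ) (x : EuclideanSpace ℝ (Fin 3)) : ℂ :=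
  ∑' p : ℕ × ℤ, (bCoef f p.1 p.2 + cCoef f h p.1 p.2) * ((‖x‖ : ℂ) ^ (-(p.1 : ℤ) - 1)) *
    Ylm p.1 p.2 (latitude x) (longitude x)

/-- `v` is a classical solution of the linearized (oblique derivative) problem
`Δv = 0` in `Ω`, `∇d⋅∇v = -2 sin θ v_r + cos θ v_θ = f/2` on `𝕊`, `v → 0` at infinity,
`v = h` on the equator; complex-valued version. -/
def SolvesObliqueC (v : EuclideanSpace ℝ (Fin 3) → ℂ) (f : ℝ → ℝ → ℂ) (h : ℝ → ℂ) : Prop :=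
  ContDiffOn ℝ 2 v extDomain ∧ ContDiffOn ℝ 1 v closedExt ∧
    (∀ x ∈ extDomain, lap v x = 0) ∧
    (∀ θ ∈ Set.Icc (-(Real.pi / 2)) (Real.pi / 2), ∀ φ : ℝ,
      -2 * (Real.sin θ : ℂ) * radialDeriv v θ φ + (Real.cos θ : ℂ) * thetaDeriv v θ φ
        = f θ φ / 2) ∧
    Filter.Tendsto v (Bornology.cobounded _) (nhds 0) ∧
    (∀ φ : ℝ, v (sphCoord 0 φ) = h φ)

/-- Real-valued version of `SolvesObliqueC`. -/
def SolvesObliqueR (v : EuclideanSpace ℝ (Fin 3) → ℝ) (f : ℝ → ℝ → ℝ) (h : ℝ → ℝ) : Prop :=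
  ContDiffOn ℝ 2 v extDomain ∧ ContDiffOn ℝ 1 v closedExt ∧
    (∀ x ∈ extDomain, lap v x = 0) ∧
    (∀ θ ∈ Set.Icc (-(Real.pi / 2)) (Real.pi / 2), ∀ φ : ℝ,
      -2 * Real.sin θ * radialDeriv v θ φ + Real.cos θ * thetaDeriv v θ φ = f θ φ / 2) ∧
    Filter.Tendsto v (Bornology.cobounded _) (nhds 0) ∧
    (∀ φ : ℝ, v (sphCoord 0 φ) = h φ)


theorem aux_D (n k : ℕ) : (Polynomial.derivative^[n] (legendreP (n + 2 * k))).eval 0 =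
    (-1 : ℝ) ^ k * (2 * n + 2 * k).factorial /
      (2 ^ (n + 2 * k) * (n + k).factorial * k.factorial) := by
  have hexp : ((Polynomial.X : Polynomial ℝ) ^ 2 - 1) ^ (n + 2 * k) =
      Polynomial.expand ℝ 2 ((Polynomial.X + Polynomial.C (-1)) ^ (n + 2 * k)) := by
    simp [sub_eq_add_neg]
  have hch : (((n + 2 * k).choose (n + k) : ℕ) : ℝ) * ((n + k).factorial * k.factorial) =
      (n + 2 * k).factorial := by
    have := Nat.choose_mul_factorial_mul_factorial (n := n + 2 * k) (k := n + k) (by omega)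
    rw [show n + 2 * k - (n + k) = k by omega] at this
    rw [← this]; push_cast; ring
  have hc : (((Polynomial.X : Polynomial ℝ) ^ 2 - 1) ^ (n + 2 * k)).coeff (2 * n + 2 * k) =
      (-1) ^ k * ((n + 2 * k).choose (n + k) : ℝ) := by
    rw [hexp, show 2 * n + 2 * k = (n + k) * 2 by ring,
      Polynomial.coeff_expand_mul (by norm_num), Polynomial.coeff_X_add_C_pow,
      show n + 2 * k - (n + k) = k by omega]
  unfold legendreP
  rw [Polynomial.iterate_derivative_C_mul, ← Function.iterate_add_apply, Polynomial.eval_mul,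
    Polynomial.eval_C, ← Polynomial.coeff_zero_eq_eval_zero, Polynomial.coeff_iterate_derivative,
    show 0 + (n + (n + 2 * k)) = 2 * n + 2 * k by ring,
    show n + (n + 2 * k) = 2 * n + 2 * k by ring, hc, Nat.descFactorial_self, nsmul_eq_mul, ← hch]
  have h1 : ((n + k).factorial : ℝ) ≠ 0 := by positivity
  have h2 : (k.factorial : ℝ) ≠ 0 := by positivity
  have h3 : (((n + 2 * k).choose (n + k) : ℕ) : ℝ) ≠ 0 := by
    have : 0 < (n + 2 * k).choose (n + k) := Nat.choose_pos (by omega)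
    positivity
  field_simp

theorem aux_assoc (n k : ℕ) : assocLegendre (n + 2 * k) n 0 = (-1 : ℝ) ^ n *
    ((-1 : ℝ) ^ k * (2 * n + 2 * k).factorial /
      (2 ^ (n + 2 * k) * (n + k).factorial * k.factorial)) := by
  unfold assocLegendre
  rw [aux_D]; simp

theorem aux_assoc_succ (n k : ℕ) : assocLegendre (n + 2 * (k + 1)) n 0 =
    -((2 * n + 2 * k + 1) / (2 * (k + 1))) * assocLegendre (n + 2 * k) n 0 := by
  rw [aux_assoc, aux_assoc, show 2 * n + 2 * (k + 1) = (2 * n + 2 * k) + 1 + 1 by ring,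
    show n + (k + 1) = (n + k) + 1 by ring, show n + 2 * (k + 1) = (n + 2 * k) + 2 by ring]
  simp only [Nat.factorial_succ]
  push_cast
  have h1 : ((n + k).factorial : ℝ) ≠ 0 := by positivity
  have h2 : (k.factorial : ℝ) ≠ 0 := by positivity
  have h3 : (n : ℝ) + k + 1 ≠ 0 := by positivity
  field_simp
  ring

theorem aux_alpha_succ (m : ℤ) (k : ℕ) : alphaY (m.natAbs + 2 * (k + 1)) m =
    alphaY (m.natAbs + 2 * k) m * √((2 * m.natAbs + 4 * k + 5) * ((2 * k + 1) * (2 * k + 2)) /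
      ((2 * m.natAbs + 4 * k + 1) * ((2 * m.natAbs + 2 * k + 1) * (2 * m.natAbs + 2 * k + 2)))) := by
  unfold alphaY
  generalize m.natAbs = n
  rw [mul_assoc ((-1 : ℝ) ^ ((m + |m|) / 2)), ← Real.sqrt_mul (by positivity)]
  congr 2
  rw [show n + 2 * (k + 1) - n = 2 * k + 1 + 1 by omega, show n + 2 * k - n = 2 * k by omega,
    show n + 2 * (k + 1) + n = (n + 2 * k + n) + 1 + 1 by ring]
  simp only [Nat.factorial_succ]
  push_cast
  have h1 : ((n + 2 * k + n).factorial : ℝ) ≠ 0 := by positivity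
  have h2 : ((2 * k).factorial : ℝ) ≠ 0 := by positivity
  have h3 : (n : ℝ) + 2 * k + n + 1 ≠ 0 := by positivity
  have h4 : (n : ℝ) + 2 * k + n + 1 + 1 ≠ 0 := by positivity
  field_simp
  ring

/-- ratio of consecutive terms -/
def auxR (n k : ℕ) : ℝ :=
  (n + 2 * k + 2) / (3 * (n + 2 * k + 3)) *
    ((2 * n + 4 * k + 5) / (2 * n + 4 * k + 1)) *
    ((2 * k + 1) * (2 * n + 2 * k + 1) / ((2 * k + 2) * (2 * n + 2 * k + 2)))

theorem aux_gamma (m : ℤ) (k : ℕ) : gammaLM (m.natAbs + 2 * (k + 1) - 1) m =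
    -((m.natAbs + 2 * k + 2) / (3 * (m.natAbs + 2 * k + 3))) *
      √((2 * k + 1) * (2 * m.natAbs + 2 * k + 1) * (2 * m.natAbs + 4 * k + 5) /
        ((2 * k + 2) * (2 * m.natAbs + 2 * k + 2) * (2 * m.natAbs + 4 * k + 1))) := by
  unfold gammaLM betaLM
  generalize m.natAbs = n
  rw [show n + 2 * (k + 1) - 1 = n + 2 * k + 1 by omega]
  push_cast
  have e1 : ((n : ℝ) + 2 * k + 1 - n) * (n + 2 * k + 1 + n) /
      ((2 * (n + 2 * k + 1) - 1) * (2 * (n + 2 * k + 1) + 1)) =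
      ((2 * k + 1) * (2 * n + 2 * k + 1)) / ((2 * n + 4 * k + 1) * (2 * n + 4 * k + 3)) := by
    congr 1 <;> ring
  have e2 : ((n : ℝ) + 2 * k + 1 + 1 - n) * (n + 2 * k + 1 + 1 + n) /
      ((2 * (n + 2 * k + 1 + 1) - 1) * (2 * (n + 2 * k + 1 + 1) + 1)) =
      ((2 * k + 2) * (2 * n + 2 * k + 2)) / ((2 * n + 4 * k + 3) * (2 * n + 4 * k + 5)) := by
    congr 1 <;> ring
  rw [e1, e2, neg_div, mul_div_mul_comm, ← Real.sqrt_div (by positivity), neg_mul]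
  congr 2
  · congr 1 <;> ring
  · congr 1
    field_simp

theorem aux_term_succ (m : ℤ) (k : ℕ) : GammaKM m (k + 1) * PzeroM m (k + 1) =
    auxR m.natAbs k * (GammaKM m k * PzeroM m k) := by
  have hG : GammaKM m (k + 1) = GammaKM m k * gammaLM (m.natAbs + 2 * (k + 1) - 1) m := by
    unfold GammaKM
    rw [Finset.prod_Icc_succ_top (by omega)]
  unfold PzeroM
  rw [hG, aux_gamma, aux_alpha_succ, aux_assoc_succ]
  generalize GammaKM m k = G
  generalize alphaY (m.natAbs + 2 * k) m = A
  generalize assocLegendre (m.natAbs + 2 * k) m.natAbs 0 = P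
  generalize m.natAbs = n
  have key : √((2 * k + 1) * (2 * n + 2 * k + 1) * (2 * n + 4 * k + 5) /
        ((2 * k + 2) * (2 * n + 2 * k + 2) * (2 * n + 4 * k + 1) : ℝ)) *
      √((2 * n + 4 * k + 5) * ((2 * k + 1) * (2 * k + 2)) /
      ((2 * n + 4 * k + 1) * ((2 * n + 2 * k + 1) * (2 * n + 2 * k + 2)))) =
      (2 * n + 4 * k + 5) * (2 * k + 1) / ((2 * n + 4 * k + 1) * (2 * n + 2 * k + 2)) := by
    rw [← Real.sqrt_mul (by positivity), Real.sqrt_eq_iff_mul_self_eq (by positivity) (by positivity)]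
    field_simp
  calc _ = (√((2 * k + 1) * (2 * n + 2 * k + 1) * (2 * n + 4 * k + 5) /
        ((2 * k + 2) * (2 * n + 2 * k + 2) * (2 * n + 4 * k + 1) : ℝ)) *
      √((2 * n + 4 * k + 5) * ((2 * k + 1) * (2 * k + 2)) /
      ((2 * n + 4 * k + 1) * ((2 * n + 2 * k + 1) * (2 * n + 2 * k + 2))))) *
      ((n + 2 * k + 2) / (3 * (n + 2 * k + 3)) * ((2 * n + 2 * k + 1) / (2 * (k + 1)))) *
      (G * (A * P)) := by ring
    _ = _ := by
      rw [key]
      unfold auxR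
      field_simp

theorem auxR_pos (n k : ℕ) : 0 ≤ auxR n k := by unfold auxR; positivity

theorem auxR_le (n k : ℕ) : auxR n k ≤ 5 / 6 := by
  unfold auxR
  have h1 : ((n : ℝ) + 2 * k + 2) / (3 * (n + 2 * k + 3)) ≤ 1 / 3 := by
    rw [div_le_div_iff₀ (by positivity) (by positivity)]; linarith
  have h2 : ((2 * n + 4 * k + 5) / (2 * n + 4 * k + 1)) *
    ((2 * k + 1) * (2 * n + 2 * k + 1) / ((2 * k + 2) * (2 * n + 2 * k + 2)) : ℝ) ≤ 5 / 2 := by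
    rw [div_mul_div_comm, div_le_div_iff₀ (by positivity) (by positivity), ← sub_nonneg]
    ring_nf
    positivity
  rw [mul_assoc]
  calc _ ≤ (1 / 3 : ℝ) * (5 / 2) := by gcongr
    _ = _ := by norm_num

/-- auxiliary: square of the Wallis ratio -/
theorem aux_wallis (n : ℕ) : ((n : ℝ) + 1) * (n.centralBinom / 4 ^ n) ^ 2 ≤ 1 ∧
    1 ≤ 4 * ((n : ℝ) + 1) * (n.centralBinom / 4 ^ n) ^ 2 := by
  have step (n : ℕ) : ((n + 1).centralBinom : ℝ) / 4 ^ (n + 1) =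
      (2 * n + 1) / (2 * n + 2) * (n.centralBinom / 4 ^ n) := by
    have := Nat.succ_mul_centralBinom_succ n
    have h : ((n : ℝ) + 1) * (n + 1).centralBinom = 2 * (2 * n + 1) * n.centralBinom := by
      exact_mod_cast this
    rw [pow_succ]
    field_simp
    linear_combination 2 * h
  constructor
  · induction n with
    | zero => simp
    | succ n ih =>
      rw [step]
      refine le_trans ?_ ih
      rw [mul_pow, ← mul_assoc]
      gcongr
      push_cast
      rw [div_pow, mul_div_assoc', div_le_iff₀ (by positivity), ← sub_nonneg]
      ring_nf
      positivity
  · have h4 : ∀ n : ℕ, 1 ≤ 4 * ((n : ℝ) + 1) * ((n + 1).centralBinom / 4 ^ (n + 1)) ^ 2 := by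
      intro n
      induction n with
      | zero => rw [step]; norm_num
      | succ n ih =>
        rw [step (n + 1)]
        refine le_trans ih ?_
        rw [mul_pow _ (_ / _), ← mul_assoc]
        refine mul_le_mul_of_nonneg_right ?_ (by positivity)
        push_cast
        rw [div_pow, mul_div_assoc', le_div_iff₀ (by positivity), ← sub_nonneg]
        ring_nf
        positivity
    cases n with
    | zero => simp
    | succ n =>
      refine le_trans (h4 n) ?_
      gcongr
      push_cast; linarith

theorem aux_t0_sq (m : ℤ) : (PzeroM m 0) ^ 2 =
    (2 * m.natAbs + 1) / (4 * π) * (m.natAbs.centralBinom / 4 ^ m.natAbs) := by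
  have hs : ((-1 : ℝ) ^ ((m + |m|) / 2)) ^ 2 = 1 := by
    rw [← zpow_natCast, ← zpow_mul]; push_cast; rw [mul_comm, zpow_mul]; norm_num
  unfold PzeroM alphaY
  rw [aux_assoc]
  generalize m.natAbs = n
  rw [mul_pow, mul_pow, hs, Real.sq_sqrt (by positivity)]
  have hn : ((-1 : ℝ) ^ n) ^ 2 = 1 := by rw [← pow_mul, mul_comm, pow_mul]; norm_num
  rw [mul_pow, hn]
  have hcb : ((n.centralBinom : ℕ) : ℝ) * (n.factorial * n.factorial) = (2 * n).factorial := by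
    have := Nat.choose_mul_factorial_mul_factorial (n := 2 * n) (k := n) (by omega)
    rw [show 2 * n - n = n by omega] at this
    rw [← this, Nat.centralBinom]; push_cast; ring
  have h1 : (n.factorial : ℝ) ≠ 0 := by positivity
  have h2 : ((2 * n).factorial : ℝ) ≠ 0 := by positivity
  have h3 : (n.centralBinom : ℝ) = (2 * n).factorial / (n.factorial * n.factorial) := by
    field_simp; linear_combination hcb
  simp only [mul_zero, add_zero, Nat.sub_self, Nat.factorial_zero, pow_zero]
  rw [show n + n = 2 * n by ring, h3, show (4 : ℝ) = 2 ^ 2 by norm_num, ← pow_mul]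
  push_cast
  field_simp
  ring

theorem aux_t0 (m : ℤ) : (1 / 6 : ℝ) * ((m.natAbs : ℝ) + 1) ^ ((1 : ℝ) / 4) ≤ |PzeroM m 0| ∧
    |PzeroM m 0| ≤ ((m.natAbs : ℝ) + 1) ^ ((1 : ℝ) / 4) := by
  have hq : |PzeroM m 0| ^ 4 = ((2 * m.natAbs + 1) / (4 * π)) ^ 2 *
      (m.natAbs.centralBinom / 4 ^ m.natAbs) ^ 2 := by
    rw [← mul_pow, ← aux_t0_sq, ← abs_pow, abs_of_nonneg (by positivity)]; ring
  have hx : ((((m.natAbs : ℝ) + 1)) ^ ((1 : ℝ) / 4)) ^ 4 = (m.natAbs : ℝ) + 1 := by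
    rw [← Real.rpow_natCast, ← Real.rpow_mul (by positivity)]; norm_num
  obtain ⟨hu, hl⟩ := aux_wallis m.natAbs
  have hy : 0 ≤ ((m.natAbs : ℝ) + 1) ^ ((1 : ℝ) / 4) := by positivity
  have hn : (0 : ℝ) ≤ m.natAbs := by positivity
  have hp3 := Real.pi_gt_three
  have hp4 := Real.pi_le_four
  have hw : 0 ≤ ((m.natAbs.centralBinom : ℝ) / 4 ^ m.natAbs) ^ 2 := by positivity
  generalize ((m.natAbs : ℝ) + 1) ^ ((1 : ℝ) / 4) = y at *
  generalize ((m.natAbs.centralBinom : ℝ) / 4 ^ m.natAbs) ^ 2 = w at *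
  generalize (m.natAbs : ℝ) = n at *
  have hb1 : (2 * n + 1) / (4 * π) ≤ n + 1 := by
    rw [div_le_iff₀ (by positivity)]; nlinarith
  have hb2 : (n + 1) / 16 ≤ (2 * n + 1) / (4 * π) := by
    rw [div_le_div_iff₀ (by positivity) (by positivity)]; nlinarith
  constructor
  · refine le_of_pow_le_pow_left₀ (n := 4) (by norm_num) (abs_nonneg _) ?_
    rw [mul_pow, hx, hq]
    calc (1 / 6 : ℝ) ^ 4 * (n + 1) ≤ (n + 1) / 1024 * 1 := by nlinarith
      _ ≤ (n + 1) / 1024 * (4 * (n + 1) * w) := by gcongr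
      _ = ((n + 1) / 16) ^ 2 * w := by ring
      _ ≤ _ := by gcongr
  · refine le_of_pow_le_pow_left₀ (n := 4) (by norm_num) hy ?_
    rw [hx, hq]
    calc _ ≤ (n + 1) ^ 2 * w := by gcongr
      _ = (n + 1) * ((n + 1) * w) := by ring
      _ ≤ (n + 1) * 1 := by gcongr
      _ = _ := by ring

/-- estimate (3.6) of Lemma 3.1:
`c (|m|+1)^{1/4} ≤ |Σ_k Γ_k^m α_{|m|+2k}^m P_{|m|+2k}^{|m|}(0)| ≤ C (|m|+1)^{1/4}`;
in particular the sum is nonzero. -/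
theorem Gamma_alpha_P_sum_bounds :
    ∃ c > 0, ∃ C > 0, ∀ m : ℤ,
      Summable (fun k : ℕ => GammaKM m k * PzeroM m k) ∧
      c * ((m.natAbs : ℝ) + 1) ^ ((1 : ℝ) / 4) ≤ |∑' k : ℕ, GammaKM m k * PzeroM m k| ∧
      |∑' k : ℕ, GammaKM m k * PzeroM m k| ≤ C * ((m.natAbs : ℝ) + 1) ^ ((1 : ℝ) / 4) ∧
      (∑' k : ℕ, GammaKM m k * PzeroM m k) ≠ 0 := by
  refine ⟨1 / 6, by norm_num, 6, by norm_num, fun m => ?_⟩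
  set t : ℕ → ℝ := fun k => GammaKM m k * PzeroM m k with ht
  have ht0 : t 0 = PzeroM m 0 := by simp [ht, GammaKM]
  have hsucc : ∀ k, t (k + 1) = auxR m.natAbs k * t k := fun k => aux_term_succ m k
  have hr : ∀ k, ∃ r, 0 ≤ r ∧ r ≤ (5 / 6 : ℝ) ^ k ∧ t k = r * t 0 := by
    intro k
    induction k with
    | zero => exact ⟨1, by norm_num, by norm_num, by ring⟩
    | succ k ih =>
      obtain ⟨r, h0, h1, h2⟩ := ih
      refine ⟨auxR m.natAbs k * r, mul_nonneg (auxR_pos _ _) h0, ?_, ?_⟩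
      · rw [pow_succ, mul_comm]
        exact mul_le_mul h1 (auxR_le _ _) (auxR_pos _ _) (by positivity)
      · rw [hsucc, h2]; ring
  obtain ⟨hl, hu⟩ := aux_t0 m
  have hypos : 0 < ((m.natAbs : ℝ) + 1) ^ ((1 : ℝ) / 4) := by positivity
  have hne : t 0 ≠ 0 := by
    rw [ht0]; intro h; rw [h, abs_zero] at hl; linarith
  choose r hr0 hr1 hr2 using hr
  have hgeo : HasSum (fun k : ℕ => (5 / 6 : ℝ) ^ k) 6 := by
    have := hasSum_geometric_of_lt_one (r := (5 / 6 : ℝ)) (by norm_num) (by norm_num)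
    norm_num at this ⊢
    exact this
  have hrs : Summable r := Summable.of_nonneg_of_le hr0 hr1 hgeo.summable
  have htr : t = fun k => r k * t 0 := funext hr2
  have hts : Summable t := by rw [htr]; exact hrs.mul_right _
  have htsum : ∑' k, t k = (∑' k, r k) * t 0 := by
    rw [← tsum_mul_right]; exact tsum_congr hr2
  have hr00 : r 0 = 1 := by
    have := hr2 0
    exact mul_right_cancel₀ hne (by rw [one_mul]; exact this.symm)
  have hS1 : 1 ≤ ∑' k, r k := by
    rw [← hr00]; exact hrs.le_tsum 0 (fun j _ => hr0 j)
  have hS6 : ∑' k, r k ≤ 6 := by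
    rw [← hgeo.tsum_eq]; exact hrs.tsum_le_tsum hr1 hgeo.summable
  have habs : |∑' k, t k| = (∑' k, r k) * |PzeroM m 0| := by
    rw [htsum, abs_mul, abs_of_nonneg (by linarith), ht0]
  refine ⟨hts, ?_, ?_, ?_⟩
  · rw [habs]
    nlinarith [abs_nonneg (PzeroM m 0)]
  · rw [habs]
    exact mul_le_mul hS6 hu (abs_nonneg _) (by norm_num)
  · rw [htsum]
    exact mul_ne_zero (by linarith) hne

end
end

section
/- Let s ≥ 0, f ∈ H^s(𝕊) with f_φ ∈ H^{(s−1/2)_+}(𝕊), and h ∈ H^{s+3/4}(ℰ). Then the function v defined on the closed exterior of 𝕊 by v(r,θ,φ) = Σ_{l=0}^∞ Σ_{m=−l}^{l} (b_l^m + c_l^m) r^{−l−1} Y_l^m(θ,φ) has trace v|_𝕊 ∈ H^{s+1}(𝕊) and satisfies ‖v‖_{H^{s+1}(𝕊)} ≤ C (‖f‖_{H^s(𝕊)} + ‖f_φ‖_{H^{(s−1/2)_+}(𝕊)} + ‖h‖_{H^{s+3/4}(ℰ)}) for some constant C > 0 independent of f and h. Here a_+ = max{a, 0}. -/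
noncomputable section

open MeasureTheory Real Filter

section

open scoped ENNReal in
lemma ser_cs (u v : ℕ → ℝ≥0∞) : (∑' n, u n * v n) ^ 2 ≤ (∑' n, u n ^ 2) * ∑' n, v n ^ 2 := by
  have h := ENNReal.lintegral_mul_le_Lp_mul_Lq (Measure.count : Measure ℕ)
    (p := 2) (q := 2) (by constructor <;> norm_num) (f := u) (g := v)
    (measurable_from_nat.aemeasurable) (measurable_from_nat.aemeasurable)
  simp only [lintegral_count, Pi.mul_apply] at h
  have h2 := pow_le_pow_left' h 2
  refine h2.trans (le_of_eq ?_)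
  rw [mul_pow, ← ENNReal.rpow_natCast, ← ENNReal.rpow_natCast, ← ENNReal.rpow_mul,
    ← ENNReal.rpow_mul]
  norm_num

open scoped ENNReal in
lemma ser_rec (q : ℝ≥0∞) (x y : ℕ → ℝ≥0∞) (h0 : x 0 = 0) (h1 : x 1 = 0)
    (h : ∀ n, x (n + 2) ≤ q * x n + y n) (n : ℕ) :
    x n ≤ ∑' j : ℕ, ∑' i : ℕ, if n = i + 2 + 2 * j then q ^ j * y i else 0 := by
  induction n using Nat.twoStepInduction with
  | zero => simp [h0]
  | one => simp [h1]
  | more n ih _ =>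
    refine (h n).trans ?_
    rw [tsum_eq_zero_add' ENNReal.summable, add_comm]
    gcongr
    · refine le_trans ?_ (ENNReal.le_tsum n)
      simp
    · calc q * x n ≤ q * ∑' j : ℕ, ∑' i : ℕ, if n = i + 2 + 2 * j then q ^ j * y i else 0 := by
            gcongr
        _ = _ := by
            rw [← ENNReal.tsum_mul_left]
            congr 1; ext j
            rw [← ENNReal.tsum_mul_left]
            congr 1; ext i
            have : (n + 2 = i + 2 + 2 * (j + 1)) ↔ (n = i + 2 + 2 * j) := by omega
            simp only [this]
            split_ifs
            · ring
            · simp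

open scoped ENNReal in
lemma ser_rec_sum (q : ℝ≥0∞) (x y w w' r : ℕ → ℝ≥0∞) (h0 : x 0 = 0) (h1 : x 1 = 0)
    (h : ∀ n, x (n + 2) ≤ q * x n + y n) (hw : ∀ i j, w (i + 2 + 2 * j) ≤ r j * w' i) :
    ∑' n, w n * x n ≤ (∑' j, q ^ j * r j) * ∑' i, w' i * y i := by
  calc ∑' n, w n * x n
      ≤ ∑' n, w n * ∑' j : ℕ, ∑' i : ℕ, if n = i + 2 + 2 * j then q ^ j * y i else 0 := by
        gcongr with n
        exact ser_rec q x y h0 h1 h n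
    _ = ∑' n, ∑' j : ℕ, ∑' i : ℕ, if n = i + 2 + 2 * j then w n * (q ^ j * y i) else 0 := by
        simp_rw [← ENNReal.tsum_mul_left, mul_ite, mul_zero]
    _ = ∑' j : ℕ, ∑' i : ℕ, ∑' n, if n = i + 2 + 2 * j then w n * (q ^ j * y i) else 0 := by
        rw [ENNReal.tsum_comm]
        congr 1; ext j
        rw [ENNReal.tsum_comm]
    _ = ∑' j : ℕ, ∑' i : ℕ, w (i + 2 + 2 * j) * (q ^ j * y i) := by
        simp_rw [tsum_ite_eq]
    _ ≤ ∑' j : ℕ, ∑' i : ℕ, (q ^ j * r j) * (w' i * y i) := by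
        refine ENNReal.tsum_le_tsum fun j => ENNReal.tsum_le_tsum fun i => ?_
        calc _ ≤ r j * w' i * (q ^ j * y i) := by gcongr; exact hw i j
          _ = _ := by ring
    _ = _ := by
        simp_rw [ENNReal.tsum_mul_left, ENNReal.tsum_mul_right]

/-- lower bound for beta. -/
lemma beta_sq (m : ℤ) (n : ℕ) : betaLM (m.natAbs + n) m ^ 2 =
    ((n : ℝ) * (2 * m.natAbs + n)) /
      ((2 * ((m.natAbs : ℝ) + n) - 1) * (2 * ((m.natAbs : ℝ) + n) + 1)) := by
  rw [betaLM, Real.sq_sqrt]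
  · push_cast; congr 1; ring
  · push_cast
    rcases Nat.eq_zero_or_pos n with rfl | hn
    · simp
    · have : (1 : ℝ) ≤ n := by exact_mod_cast hn
      have h0 : (0 : ℝ) ≤ m.natAbs := by positivity
      apply div_nonneg
      · apply mul_nonneg <;> linarith
      · apply mul_nonneg <;> linarith

lemma beta_nonneg (l : ℕ) (m : ℤ) : 0 ≤ betaLM l m := Real.sqrt_nonneg _

lemma beta_lower (m : ℤ) (n : ℕ) :
    ((n : ℝ) + 1) / (4 * ((m.natAbs : ℝ) + n + 1)) ≤ betaLM (m.natAbs + n + 1) m ^ 2 := by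
  have h := beta_sq m (n + 1)
  rw [← add_assoc] at h
  rw [h]
  push_cast
  have h0 : (0 : ℝ) ≤ m.natAbs := by positivity
  have h1 : (0 : ℝ) ≤ n := by positivity
  generalize (m.natAbs : ℝ) = M at *
  generalize (n : ℝ) = N at *
  have e1 : 0 < 2 * (M + (N + 1)) - 1 := by linarith
  rw [div_le_div_iff₀ (by positivity) (by positivity)]
  have : (2 * (M + (N + 1)) - 1) * (2 * (M + (N + 1)) + 1) ≤ 4 * (M + N + 1) ^ 2 := by nlinarith
  calc (N + 1) * ((2 * (M + (N + 1)) - 1) * (2 * (M + (N + 1)) + 1))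
      ≤ (N + 1) * (4 * (M + N + 1) ^ 2) := by gcongr
    _ ≤ (N + 1) * (2 * M + (N + 1)) * (4 * (M + N + 1)) := by
      have : 0 ≤ (N + 1) * (M + N + 1) * M := by positivity
      nlinarith

lemma beta_pos (m : ℤ) (n : ℕ) : 0 < betaLM (m.natAbs + n + 1) m := by
  have h := beta_lower m n
  have : 0 < ((n : ℝ) + 1) / (4 * ((m.natAbs : ℝ) + n + 1)) := by positivity
  exact (sq_pos_iff.mp (this.trans_le h)).lt_of_le' (beta_nonneg _ _)

lemma gamma_nonpos (m : ℤ) (n : ℕ) : gammaLM (m.natAbs + n) m ≤ 0 := by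
  rw [gammaLM]
  have := beta_pos m n
  have h2 := beta_nonneg (m.natAbs + n) m
  rw [neg_div]
  rw [neg_nonpos]
  positivity

lemma gamma_abs (m : ℤ) (n : ℕ) : |gammaLM (m.natAbs + n) m| ≤ 1 / 3 := by
  have hb := beta_pos m n
  have hb2 := beta_nonneg (m.natAbs + n) m
  rw [gammaLM, neg_div, abs_neg, abs_of_nonneg (by positivity)]
  rw [div_le_div_iff₀ (by positivity) (by norm_num)]
  suffices ((↑(m.natAbs + n) : ℝ) + 1) * betaLM (m.natAbs + n) m ≤
    ((↑(m.natAbs + n) : ℝ) + 2) * betaLM (m.natAbs + n + 1) m by linarith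
  apply le_of_sq_le_sq _ (by positivity)
  rw [mul_pow, mul_pow, beta_sq]
  have h := beta_sq m (n + 1)
  rw [← add_assoc] at h
  rw [h]
  rcases Nat.eq_zero_or_pos n with rfl | hn
  · simp
    apply mul_nonneg (by positivity)
    apply div_nonneg (by positivity)
    have : (0 : ℝ) ≤ |(m : ℝ)| := abs_nonneg _
    apply mul_nonneg <;> linarith
  push_cast
  have h0 : (0 : ℝ) ≤ m.natAbs := by positivity
  have h1 : (1 : ℝ) ≤ n := by exact_mod_cast hn
  generalize (m.natAbs : ℝ) = M at *
  generalize (n : ℝ) = N at *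
  obtain ⟨a, ha, rfl⟩ : ∃ a, 0 ≤ a ∧ N = a + 1 := ⟨N - 1, by linarith, by ring⟩
  have e1 : 0 < 2 * (M + (a + 1)) - 1 := by linarith
  have e2 : 0 < 2 * (M + (a + 1 + 1)) - 1 := by linarith
  rw [mul_div_assoc', mul_div_assoc', div_le_div_iff₀ (by positivity) (by positivity)]
  have e3 : 2 * (M + (a + 1 + 1)) - 1 = 2 * (M + (a + 1)) + 1 := by ring
  rw [e3]
  have key : (M + (a + 1) + 1) ^ 2 * ((a + 1) * (2 * M + (a + 1))) * (2 * (M + (a + 1 + 1)) + 1)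
      ≤ (M + (a + 1) + 2) ^ 2 * ((a + 1 + 1) * (2 * M + (a + 1 + 1))) * (2 * (M + (a + 1)) - 1) := by
    rw [← sub_nonneg]
    ring_nf
    positivity
  nlinarith [mul_le_mul_of_nonneg_right key (show 0 ≤ 2 * (M + (a + 1)) + 1 by linarith)]

lemma aCoef_bound (f : ℝ → ℝ → ℂ) (m : ℤ) (n : ℕ) :
    ‖aCoef f (m.natAbs + n) m‖ ^ 2 ≤ ‖flCoeff f (m.natAbs + n) m‖ ^ 2 /
      (((m.natAbs : ℝ) + n + 1) * (n + 1)) := by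
  rw [aCoef, norm_div, Complex.norm_real, Real.norm_eq_abs, div_pow, sq_abs, mul_pow]
  have := beta_lower m n
  apply div_le_div_of_nonneg_left (by positivity) (by positivity)
  push_cast
  calc ((m.natAbs : ℝ) + n + 1) * (n + 1)
      = (4 * ((m.natAbs : ℝ) + n + 1) ^ 2) * (((n : ℝ) + 1) / (4 * ((m.natAbs : ℝ) + n + 1))) := by
        field_simp
    _ ≤ (6 * ((m.natAbs : ℝ) + n + 2)) ^ 2 * betaLM (m.natAbs + n + 1) m ^ 2 := by
        gcongr
        have : (0 : ℝ) ≤ (m.natAbs : ℝ) + n := by positivity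
        nlinarith

lemma Gamma_sign (m : ℤ) (k : ℕ) : 0 ≤ (-1) ^ k * GammaKM m k ∧ |GammaKM m k| ≤ (1 / 3) ^ k := by
  induction k with
  | zero => simp [GammaKM]
  | succ k ih =>
    have e : GammaKM m (k + 1) = GammaKM m k * gammaLM (m.natAbs + (2 * k + 1)) m := by
      rw [GammaKM, Finset.prod_Icc_succ_top (by omega)]
      rfl
    have h1 := gamma_nonpos m (2 * k + 1)
    have h2 := gamma_abs m (2 * k + 1)
    rw [e]
    constructor
    · have := mul_nonneg ih.1 (neg_nonneg.mpr h1)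
      calc _ ≤ _ := this
        _ = _ := by ring
    · rw [abs_mul, pow_succ]
      gcongr
      exact ih.2

end

section

/-- the ratio `(2n)! / (4^n n!^2)`. -/
def uCB (n : ℕ) : ℝ := (2 * n).factorial / (4 ^ n * (n.factorial : ℝ) ^ 2)

lemma uCB_pos (n : ℕ) : 0 < uCB n := by unfold uCB; positivity

lemma uCB_succ (n : ℕ) : uCB (n + 1) = uCB n * ((2 * n + 1) / (2 * n + 2)) := by
  unfold uCB
  have : 2 * (n + 1) = (2 * n + 1) + 1 := by ring
  rw [this, Nat.factorial_succ, Nat.factorial_succ, Nat.factorial_succ]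
  push_cast
  field_simp
  ring

lemma uCB_upper (n : ℕ) : uCB n ^ 2 * (n + 1) ≤ 1 := by
  induction n with
  | zero => simp [uCB]
  | succ n ih =>
    rw [uCB_succ, mul_pow, mul_assoc]
    refine le_trans ?_ ih
    gcongr
    push_cast
    rw [div_pow, div_mul_eq_mul_div, div_le_iff₀ (by positivity)]
    have : (0 : ℝ) ≤ n := by positivity
    nlinarith

lemma uCB_lower (n : ℕ) : 1 ≤ uCB n ^ 2 * (4 * (n + 1)) := by
  have key : ∀ n : ℕ, 1 ≤ n → 1 ≤ uCB n ^ 2 * (4 * n) := by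
    intro n hn
    induction n, hn using Nat.le_induction with
    | base => simp [uCB]; norm_num
    | succ n hn ih =>
      rw [uCB_succ, mul_pow, mul_assoc]
      refine ih.trans ?_
      apply mul_le_mul_of_nonneg_left _ (sq_nonneg _)
      push_cast
      rw [div_pow, div_mul_eq_mul_div, le_div_iff₀ (by positivity)]
      have : (0 : ℝ) ≤ n := by positivity
      nlinarith
  rcases Nat.eq_zero_or_pos n with rfl | hn
  · simp [uCB]
  · refine (key n hn).trans ?_
    gcongr
    linarith

lemma coeff_sq_sub (l j : ℕ) : ((Polynomial.X ^ 2 - 1 : Polynomial ℝ) ^ l).coeff (2 * j) =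
    (-1) ^ (l - j) * (l.choose j : ℝ) := by
  have : (Polynomial.X ^ 2 - 1 : Polynomial ℝ) ^ l =
      Polynomial.expand ℝ 2 ((Polynomial.X - Polynomial.C 1) ^ l) := by
    simp
  rw [this, mul_comm 2 j, Polynomial.coeff_expand_mul (by norm_num), sub_eq_add_neg, ← Polynomial.C_neg, Polynomial.coeff_X_add_C_pow]

lemma deriv_legendre (l M : ℕ) : Polynomial.derivative^[M] (legendreP l) =
    Polynomial.C ((2 ^ l * l.factorial : ℝ)⁻¹) *
      Polynomial.derivative^[M + l] ((Polynomial.X ^ 2 - 1) ^ l) := by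
  rw [legendreP, Polynomial.iterate_derivative_C_mul, ← Function.iterate_add_apply]

lemma assoc_zero (M k : ℕ) : assocLegendre (M + 2 * k) M 0 = (-1) ^ M * ((-1) ^ k *
    ((2 * (M + k)).factorial / (2 ^ (M + 2 * k) * (M + k).factorial * k.factorial))) := by
  rw [assocLegendre, deriv_legendre, Polynomial.eval_mul, Polynomial.eval_C,
    ← Polynomial.coeff_zero_eq_eval_zero, Polynomial.coeff_iterate_derivative]
  have e : 0 + (M + (M + 2 * k)) = 2 * (M + k) := by ring
  have e' : M + (M + 2 * k) = 2 * (M + k) := by ring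
  rw [e, e', coeff_sq_sub, Nat.descFactorial_self]
  have e2 : M + 2 * k - (M + k) = k := by omega
  have e3 : M + 2 * k = (M + k) + k := by omega
  have h := Nat.choose_mul_factorial_mul_factorial (n := M + 2 * k) (k := M + k) (by omega)
  rw [e2] at h ⊢
  have h' : ((M + 2 * k).choose (M + k) : ℝ) =
      (M + 2 * k).factorial / ((M + k).factorial * k.factorial) := by
    rw [eq_div_iff (by positivity), ← mul_assoc]
    exact_mod_cast h
  rw [h']
  simp
  field_simp

lemma alphaY_sq (l : ℕ) (m : ℤ) : alphaY l m ^ 2 = ((2 * l + 1) * (l - m.natAbs).factorial /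
      (4 * Real.pi * (l + m.natAbs).factorial)) := by
  rw [alphaY, mul_pow, Real.sq_sqrt (by positivity)]
  have : ((-1 : ℝ) ^ ((m + |m|) / 2)) ^ 2 = 1 := by
    rcases Int.even_or_odd ((m + |m|) / 2) with h | h
    · simp [h.neg_one_zpow]
    · simp [h.neg_one_zpow]
  rw [this, one_mul]

lemma Pzero_sq (m : ℤ) (k : ℕ) : PzeroM m k ^ 2 =
    (2 * ((m.natAbs : ℝ) + 2 * k) + 1) / (4 * Real.pi) * (uCB k * uCB (m.natAbs + k)) := by
  rw [PzeroM, mul_pow, alphaY_sq, assoc_zero]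
  generalize m.natAbs = M
  have e1 : M + 2 * k - M = 2 * k := by omega
  have e2 : M + 2 * k + M = 2 * (M + k) := by omega
  rw [e1, e2, mul_pow, mul_pow, ← pow_mul, ← pow_mul, mul_comm M 2, mul_comm k 2, pow_mul, pow_mul]
  unfold uCB
  have h4 : ∀ n : ℕ, (4 : ℝ) ^ n = (2 ^ n) ^ 2 := by
    intro n; rw [← pow_mul, mul_comm, pow_mul]; norm_num
  rw [h4, h4]
  push_cast
  have := Real.pi_pos
  field_simp
  ring

lemma Pzero_four (m : ℤ) (k : ℕ) : PzeroM m k ^ 4 ≤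
    ((m.natAbs : ℝ) + (2 * k + 1) + 1) / ((2 * k + 1) + 1) := by
  have : PzeroM m k ^ 4 = (PzeroM m k ^ 2) ^ 2 := by ring
  rw [this, Pzero_sq, mul_pow, mul_pow]
  have h1 := uCB_upper k
  have h2 := uCB_upper (m.natAbs + k)
  push_cast at h2
  have hM : (0 : ℝ) ≤ m.natAbs := by positivity
  have hk : (0 : ℝ) ≤ k := by positivity
  generalize (m.natAbs : ℝ) = M at *
  rw [← le_div_iff₀ (by positivity)] at h1 h2
  have hpi := Real.pi_gt_three
  calc _ ≤ ((2 * (M + 2 * k) + 1) / (4 * 3)) ^ 2 * (1 / (k + 1) * (1 / (M + k + 1))) := by gcongr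
    _ ≤ _ := by
      rw [div_pow, div_mul_div_comm, div_mul_div_comm, div_le_div_iff₀ (by positivity) (by positivity)]
      have : (2 * (M + 2 * k) + 1) ^ 2 ≤ 8 * (M + 2 * k + 1) * (M + k + 1) := by nlinarith
      calc _ ≤ 8 * (M + 2 * k + 1) * (M + k + 1) * (1 * 1) * (2 * k + 1 + 1) := by gcongr
        _ ≤ (M + (2 * (k:ℝ) + 1) + 1) * ((4 * 3) ^ 2 * ((k + 1) * (M + k + 1))) := by
          have : 0 ≤ (M + 2 * k + 1) * (M + k + 1) * (k + 1) := by positivity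
          have : 0 ≤ (M + k + 1) * ((k:ℝ) + 1) := by positivity
          nlinarith

lemma Pzero_lower (m : ℤ) : (m.natAbs : ℝ) + 1 ≤ 1024 * PzeroM m 0 ^ 4 := by
  have : PzeroM m 0 ^ 4 = (PzeroM m 0 ^ 2) ^ 2 := by ring
  rw [this, Pzero_sq, mul_pow, mul_pow]
  have h2 := uCB_lower m.natAbs
  have h1 : uCB 0 = 1 := by simp [uCB]
  rw [h1]
  simp only [add_zero, Nat.cast_zero, mul_zero]
  have hM : (0 : ℝ) ≤ m.natAbs := by positivity
  generalize hu : uCB m.natAbs = u at *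
  generalize (m.natAbs : ℝ) = M at *
  have hpi : Real.pi < 4 := Real.pi_lt_four
  have hpi0 := Real.pi_pos
  rw [← div_le_iff₀ (by positivity)] at h2
  calc M + 1 ≤ 1024 * (((2 * M + 1) / (4 * 4)) ^ 2 * (1 ^ 2 * (1 / (4 * (M + 1))))) := by
        rw [div_pow, one_pow, one_mul, div_mul_div_comm, mul_div_assoc', le_div_iff₀ (by positivity)]
        nlinarith
    _ ≤ _ := by gcongr

lemma Pzero_signs (m : ℤ) (k : ℕ) : 0 ≤ (GammaKM m k * PzeroM m k) * PzeroM m 0 := by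
  have hg := (Gamma_sign m k).1
  rw [PzeroM, PzeroM, assoc_zero, assoc_zero]
  unfold alphaY
  have e : ∀ (g a b c d e h i : ℝ), g * (a * b * (c * (d * e))) * (a * h * (c * i))
     = (a ^ 2 * c ^ 2) * (d * g) * (b * e * h * i) := by intros; ring
  rw [e]
  apply mul_nonneg
  · exact mul_nonneg (by positivity) hg
  · positivity

lemma denom_lower (m : ℤ) : (∑' k : ℕ, GammaKM m k * PzeroM m k) = 0 ∨
    |PzeroM m 0| ≤ |∑' k : ℕ, GammaKM m k * PzeroM m k| := by
  by_cases hs : Summable fun k : ℕ => GammaKM m k * PzeroM m k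
  · right
    have h := (hs.mul_right (PzeroM m 0)).le_tsum 0 (fun j _ => Pzero_signs m j)
    rw [tsum_mul_right] at h
    have h0 : GammaKM m 0 = 1 := by simp [GammaKM]
    rw [h0, one_mul] at h
    have hp : 0 < |PzeroM m 0| := by
      have := Pzero_lower m
      rw [abs_pos]
      intro h
      rw [h] at this
      norm_num at this
      have : (0 : ℝ) ≤ |(m : ℝ)| := abs_nonneg _
      linarith
    have := le_abs_self ((∑' k : ℕ, GammaKM m k * PzeroM m k) * PzeroM m 0)
    rw [abs_mul] at this
    rw [← abs_mul_abs_self] at h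
    exact le_of_mul_le_mul_right (h.trans this) hp
  · left; exact tsum_eq_zero_of_not_summable hs

end

section

open ENNReal (ofReal)

lemma geo_fin (p q : ℝ) (hp : 0 ≤ p) (hq : 0 < q) (hq1 : q < 1) :
    ∑' j : ℕ, ofReal q ^ j * ofReal ((2 * (j : ℝ) + 2) ^ p) ≠ ⊤ := by
  obtain ⟨k, hk⟩ := exists_nat_ge p
  have h1 : Summable fun j : ℕ => ((j : ℝ)) ^ k * q ^ j :=
    summable_pow_mul_geometric_of_norm_lt_one k (by rwa [Real.norm_of_nonneg hq.le])
  have h2 := ((summable_nat_add_iff 1).mpr h1).mul_left (2 ^ k / q)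
  have h3 : Summable fun j : ℕ => q ^ j * (2 * (j : ℝ) + 2) ^ p := by
    refine Summable.of_nonneg_of_le (fun j => by positivity) (fun j => ?_) h2
    calc q ^ j * (2 * (j : ℝ) + 2) ^ p ≤ q ^ j * (2 * (j : ℝ) + 2) ^ (k : ℝ) := by
          gcongr
          have : (0 : ℝ) ≤ j := by positivity
          linarith
      _ = _ := by
          rw [Real.rpow_natCast]
          have : 2 * (j : ℝ) + 2 = 2 * (j + 1) := by ring
          rw [this, mul_pow]
          push_cast
          field_simp
          ring
  have h4 := h3.tsum_ofReal_ne_top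
  convert h4 using 4 with j
  rw [ENNReal.ofReal_mul (by positivity), ENNReal.ofReal_pow hq.le]

lemma bCoef_eq (f : ℝ → ℝ → ℂ) (m : ℤ) (n : ℕ) :
    bCoef f (m.natAbs + n) m = bSeq f m (n + 1) := by
  rw [bCoef]; congr 1; omega

lemma bSeq_step (f : ℝ → ℝ → ℂ) (m : ℤ) (n : ℕ) :
    ‖bSeq f m (n + 2)‖ ≤ 1 / 3 * ‖bSeq f m n‖ + ‖aCoef f (m.natAbs + n) m‖ := by
  rw [bSeq]
  refine (norm_add_le _ _).trans ?_
  rw [norm_mul, Complex.norm_real, Real.norm_eq_abs]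
  gcongr
  exact gamma_abs m n

lemma b_sum (p : ℝ) (hp : 0 ≤ p) : ∃ K : ENNReal, K ≠ ⊤ ∧ ∀ (f : ℝ → ℝ → ℂ) (m : ℤ),
    ∑' n : ℕ, ofReal (((m.natAbs : ℝ) + n + 1) ^ p * ‖bCoef f (m.natAbs + n) m‖ ^ 2) ≤
    K * ∑' n : ℕ, ofReal (((m.natAbs : ℝ) + n + 1) ^ p * ‖aCoef f (m.natAbs + n) m‖ ^ 2) := by
  refine ⟨(∑' j : ℕ, ofReal (2 / 9) ^ j * ofReal ((2 * (j : ℝ) + 2) ^ p)) * 2,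
    ENNReal.mul_ne_top (geo_fin p _ hp (by norm_num) (by norm_num)) (by simp), fun f m => ?_⟩
  have h := ser_rec_sum (ofReal (2 / 9)) (fun n => ofReal (‖bSeq f m n‖ ^ 2))
    (fun n => ofReal (2 * ‖aCoef f (m.natAbs + n) m‖ ^ 2))
    (fun n => ofReal (((m.natAbs : ℝ) + n) ^ p))
    (fun n => ofReal (((m.natAbs : ℝ) + n + 1) ^ p))
    (fun j => ofReal ((2 * (j : ℝ) + 2) ^ p)) (by simp [bSeq]) (by simp [bSeq])
    (fun n => ?_) (fun i j => ?_)
  · calc _ = ∑' n : ℕ, ofReal (((m.natAbs : ℝ) + (n + 1 : ℕ)) ^ p) *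
            ofReal (‖bSeq f m (n + 1)‖ ^ 2) := by
          congr 1; ext n
          rw [bCoef_eq, ENNReal.ofReal_mul (by positivity)]
          push_cast; rw [add_assoc]
      _ ≤ ∑' n : ℕ, ofReal (((m.natAbs : ℝ) + n) ^ p) * ofReal (‖bSeq f m n‖ ^ 2) :=
          ENNReal.tsum_comp_le_tsum_of_injective (add_left_injective 1)
            (fun n : ℕ => ofReal (((m.natAbs : ℝ) + n) ^ p) * ofReal (‖bSeq f m n‖ ^ 2))
      _ ≤ _ := h
      _ = _ := by
          rw [mul_assoc, ← ENNReal.tsum_mul_left (a := 2)]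
          congr 2; ext n
          rw [ENNReal.ofReal_mul (by norm_num), ENNReal.ofReal_mul (by positivity)]
          simp; ring
  · rw [← ENNReal.ofReal_mul (by norm_num), ← ENNReal.ofReal_add (by positivity) (by positivity)]
    apply ENNReal.ofReal_le_ofReal
    have := bSeq_step f m n
    have h2 := pow_le_pow_left₀ (norm_nonneg _) this 2
    nlinarith [sq_nonneg (1 / 3 * ‖bSeq f m n‖ - ‖aCoef f (m.natAbs + n) m‖)]
  · rw [← ENNReal.ofReal_mul (by positivity)]
    apply ENNReal.ofReal_le_ofReal
    rw [← Real.mul_rpow (by positivity) (by positivity)]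
    apply Real.rpow_le_rpow (by positivity) _ hp
    push_cast
    have h0 : (0 : ℝ) ≤ m.natAbs := by positivity
    have h1 : (0 : ℝ) ≤ i := by positivity
    have h2 : (0 : ℝ) ≤ j := by positivity
    generalize (m.natAbs : ℝ) = M at *
    nlinarith [mul_nonneg h2 h0, mul_nonneg h2 h1]

lemma g_bound (M i : ℝ) (hM : 0 ≤ M) (hi : 0 ≤ i) (a F : ℝ)
    (ha : a ^ 2 ≤ F ^ 2 / ((M + i + 1) * (i + 1))) :
    (M + 1) ^ (1 / 2 : ℝ) * (((M + i + 1) / (i + 1)) ^ (1 / 4 : ℝ) * a * (i + 1) ^ (3 / 4 : ℝ)) ^ 2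
      ≤ F ^ 2 := by
  have e1 : (((M + i + 1) / (i + 1)) ^ (1 / 4 : ℝ)) ^ 2 = ((M + i + 1) / (i + 1)) ^ (1 / 2 : ℝ) := by
    rw [← Real.rpow_natCast, ← Real.rpow_mul (by positivity)]; norm_num
  have e2 : ((i + 1) ^ (3 / 4 : ℝ)) ^ 2 = (i + 1) ^ (1 / 2 : ℝ) * (i + 1) := by
    rw [← Real.rpow_natCast, ← Real.rpow_mul (by positivity), ← Real.rpow_add_one (by positivity)]
    norm_num
  rw [mul_pow, mul_pow, e1, e2, Real.div_rpow (by positivity) (by positivity)]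
  have e3 : (M + i + 1) ^ (1 / 2 : ℝ) * (M + i + 1) ^ (1 / 2 : ℝ) = M + i + 1 := by
    rw [← Real.rpow_add (by positivity)]; norm_num
  have e4 : (M + 1) ^ (1 / 2 : ℝ) ≤ (M + i + 1) ^ (1 / 2 : ℝ) := by
    apply Real.rpow_le_rpow (by positivity) (by linarith) (by norm_num)
  have hpos : 0 < (i + 1) ^ (1 / 2 : ℝ) := by positivity
  calc _ ≤ (M + i + 1) ^ (1 / 2 : ℝ) * ((M + i + 1) ^ (1 / 2 : ℝ) / (i + 1) ^ (1 / 2 : ℝ) *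
        (F ^ 2 / ((M + i + 1) * (i + 1))) * ((i + 1) ^ (1 / 2 : ℝ) * (i + 1))) := by gcongr
    _ = ((M + i + 1) ^ (1 / 2 : ℝ) * (M + i + 1) ^ (1 / 2 : ℝ)) * F ^ 2 / (M + i + 1) := by
        field_simp
    _ = _ := by rw [e3]; field_simp

lemma zsum32 : ∑' i : ℕ, ofReal (((i : ℝ) + 1) ^ (-(3 / 2) : ℝ)) ≠ ⊤ := by
  have h : Summable fun n : ℕ => ((n : ℝ)) ^ (-(3 / 2) : ℝ) :=
    Real.summable_nat_rpow.mpr (by norm_num)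
  have := ((summable_nat_add_iff 1).mpr h).tsum_ofReal_ne_top
  simpa using this

lemma S_sum : ∃ K : ENNReal, K ≠ ⊤ ∧ ∀ (f : ℝ → ℝ → ℂ) (m : ℤ),
    ofReal (((m.natAbs : ℝ) + 1) ^ (1 / 2 : ℝ)) *
      (∑' k : ℕ, ‖bCoef f (m.natAbs + 2 * k) m * ((PzeroM m k : ℝ) : ℂ)‖ₑ) ^ 2 ≤
    K * ∑' n : ℕ, ofReal (‖flCoeff f (m.natAbs + n) m‖ ^ 2) := by
  set K0 := ∑' j : ℕ, ofReal (1 / 3) ^ j * ofReal ((2 * (j : ℝ) + 2) ^ (0 : ℝ)) with hK0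
  set Z := ∑' i : ℕ, ofReal (((i : ℝ) + 1) ^ (-(3 / 2) : ℝ)) with hZ
  refine ⟨K0 ^ 2 * Z, ENNReal.mul_ne_top (ENNReal.pow_ne_top
    (geo_fin 0 _ le_rfl (by norm_num) (by norm_num))) zsum32, fun f m => ?_⟩
  have hM : (0 : ℝ) ≤ m.natAbs := by positivity
  set g : ℕ → ℝ := fun n => (((m.natAbs : ℝ) + n + 1) / (n + 1)) ^ (1 / 4 : ℝ) with hg
  have hg0 : ∀ n, 0 ≤ g n := fun n => by rw [hg]; positivity
  have h := ser_rec_sum (ofReal (1 / 3)) (fun n => ofReal (‖bSeq f m n‖))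
    (fun n => ofReal (‖aCoef f (m.natAbs + n) m‖))
    (fun n => ofReal (g n)) (fun n => ofReal (g n))
    (fun j => ofReal ((2 * (j : ℝ) + 2) ^ (0 : ℝ))) (by simp [bSeq]) (by simp [bSeq])
    (fun n => ?_) (fun i j => ?_)
  · have h1 : (∑' k : ℕ, ‖bCoef f (m.natAbs + 2 * k) m * ((PzeroM m k : ℝ) : ℂ)‖ₑ) ≤
        K0 * ∑' i, ofReal (g i) * ofReal (‖aCoef f (m.natAbs + i) m‖) := by
      refine le_trans ?_ h
      refine le_trans ?_ (ENNReal.tsum_comp_le_tsum_of_injective (f := fun k : ℕ => 2 * k + 1)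
        (fun a b hab => by simpa using hab) _)
      refine ENNReal.tsum_le_tsum fun k => ?_
      rw [enorm_mul, mul_comm, bCoef_eq, ← ofReal_norm, ← ofReal_norm]
      gcongr
      rw [Complex.norm_real, Real.norm_eq_abs]
      have h4 := Pzero_four m k
      have : |PzeroM m k| = (|PzeroM m k| ^ 4) ^ (1 / 4 : ℝ) := by
        rw [← Real.rpow_natCast, ← Real.rpow_mul (abs_nonneg _)]; norm_num
      rw [this, hg]
      apply Real.rpow_le_rpow (by positivity) _ (by norm_num)
      rw [Even.pow_abs (by decide)]
      push_cast
      exact h4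
    have h2 := ser_cs (fun i => ofReal (g i * ‖aCoef f (m.natAbs + i) m‖ * ((i : ℝ) + 1) ^ (3 / 4 : ℝ)))
      (fun i => ofReal (((i : ℝ) + 1) ^ (-(3 / 4) : ℝ)))
    have e1 : ∀ i : ℕ, ofReal (g i * ‖aCoef f (m.natAbs + i) m‖ * ((i : ℝ) + 1) ^ (3 / 4 : ℝ)) *
        ofReal (((i : ℝ) + 1) ^ (-(3 / 4) : ℝ)) =
        ofReal (g i) * ofReal (‖aCoef f (m.natAbs + i) m‖) := by
      intro i
      have := hg0 i
      rw [← ENNReal.ofReal_mul (by positivity), ← ENNReal.ofReal_mul (by positivity), mul_assoc,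
        ← Real.rpow_add (by positivity)]
      norm_num
    have e2 : ∀ i : ℕ, ofReal (((i : ℝ) + 1) ^ (-(3 / 4) : ℝ)) ^ 2 =
        ofReal (((i : ℝ) + 1) ^ (-(3 / 2) : ℝ)) := by
      intro i
      rw [← ENNReal.ofReal_pow (by positivity), ← Real.rpow_natCast, ← Real.rpow_mul (by positivity)]
      norm_num
    simp_rw [e1, e2] at h2
    calc _ ≤ ofReal (((m.natAbs : ℝ) + 1) ^ (1 / 2 : ℝ)) *
          (K0 * ∑' i, ofReal (g i) * ofReal (‖aCoef f (m.natAbs + i) m‖)) ^ 2 := by gcongr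
      _ = K0 ^ 2 * (ofReal (((m.natAbs : ℝ) + 1) ^ (1 / 2 : ℝ)) *
          (∑' i, ofReal (g i) * ofReal (‖aCoef f (m.natAbs + i) m‖)) ^ 2) := by ring
      _ ≤ K0 ^ 2 * (ofReal (((m.natAbs : ℝ) + 1) ^ (1 / 2 : ℝ)) * ((∑' i : ℕ, ofReal
          (g i * ‖aCoef f (m.natAbs + i) m‖ * ((i : ℝ) + 1) ^ (3 / 4 : ℝ)) ^ 2) * Z)) := by gcongr
      _ = K0 ^ 2 * Z * (∑' i : ℕ, ofReal (((m.natAbs : ℝ) + 1) ^ (1 / 2 : ℝ)) * ofReal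
          (g i * ‖aCoef f (m.natAbs + i) m‖ * ((i : ℝ) + 1) ^ (3 / 4 : ℝ)) ^ 2) := by
            rw [ENNReal.tsum_mul_left]; ring
      _ ≤ _ := by
          gcongr with i
          have := hg0 i
          rw [← ENNReal.ofReal_pow (by positivity), ← ENNReal.ofReal_mul (by positivity)]
          apply ENNReal.ofReal_le_ofReal
          exact g_bound _ _ hM (by positivity) _ _ (aCoef_bound f m i)
  · rw [← ENNReal.ofReal_mul (by norm_num), ← ENNReal.ofReal_add (by positivity) (by positivity)]
    exact ENNReal.ofReal_le_ofReal (bSeq_step f m n)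
  · rw [Real.rpow_zero, ENNReal.ofReal_one, one_mul]
    apply ENNReal.ofReal_le_ofReal
    rw [hg]
    apply Real.rpow_le_rpow (by positivity) _ (by norm_num)
    rw [div_le_div_iff₀ (by positivity) (by positivity)]
    push_cast
    have h1 : (0 : ℝ) ≤ i := by positivity
    have h2 : (0 : ℝ) ≤ j := by positivity
    generalize (m.natAbs : ℝ) = M at *
    nlinarith [mul_nonneg h2 hM, mul_nonneg h2 h1]

lemma ennreal_add_sq (x y : ENNReal) : (x + y) ^ 2 ≤ 4 * (x ^ 2 + y ^ 2) := by
  rcases le_total x y with h | h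
  · calc (x + y) ^ 2 ≤ (y + y) ^ 2 := by gcongr
      _ = 4 * y ^ 2 := by ring
      _ ≤ _ := by gcongr; exact le_add_self
  · calc (x + y) ^ 2 ≤ (x + x) ^ 2 := by gcongr
      _ = 4 * x ^ 2 := by ring
      _ ≤ _ := by gcongr; exact le_self_add

lemma aTilde_bound (f : ℝ → ℝ → ℂ) (h : ℝ → ℂ) (m : ℤ) :
    ofReal (((m.natAbs : ℝ) + 1) ^ (1 / 2 : ℝ)) * ‖aTilde f h m‖ₑ ^ 2 ≤ 128 *
      (‖equatorCoeff h m‖ₑ ^ 2 +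
        (∑' k : ℕ, ‖bCoef f (m.natAbs + 2 * k) m * ((PzeroM m k : ℝ) : ℂ)‖ₑ) ^ 2) := by
  rcases denom_lower m with h0 | h0
  · simp [aTilde, h0]
  set N := equatorCoeff h m - ∑' k : ℕ, bCoef f (m.natAbs + 2 * k) m * ((PzeroM m k : ℝ) : ℂ) with hN
  have h1 : ((m.natAbs : ℝ) + 1) ^ (1 / 2 : ℝ) ≤ 32 * PzeroM m 0 ^ 2 := by
    have := Pzero_lower m
    calc ((m.natAbs : ℝ) + 1) ^ (1 / 2 : ℝ) ≤ ((32 * PzeroM m 0 ^ 2) ^ 2) ^ (1 / 2 : ℝ) := by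
          apply Real.rpow_le_rpow (by positivity) _ (by norm_num)
          linarith
      _ = _ := by
          rw [← Real.rpow_natCast, ← Real.rpow_mul (by positivity)]; norm_num
  have hpos : 0 < PzeroM m 0 ^ 2 := by
    have : 0 < ((m.natAbs : ℝ) + 1) ^ (1 / 2 : ℝ) := by positivity
    linarith
  have h2 : ((m.natAbs : ℝ) + 1) ^ (1 / 2 : ℝ) * ‖aTilde f h m‖ ^ 2 ≤ 32 * ‖N‖ ^ 2 := by
    rw [aTilde, ← hN, norm_div, Complex.norm_real, Real.norm_eq_abs, div_pow]
    have h3 : PzeroM m 0 ^ 2 ≤ |∑' k : ℕ, GammaKM m k * PzeroM m k| ^ 2 := by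
      rw [← sq_abs]; gcongr
    calc _ ≤ 32 * PzeroM m 0 ^ 2 * (‖N‖ ^ 2 / PzeroM m 0 ^ 2) := by gcongr
      _ = _ := by
        have hne : PzeroM m 0 ≠ 0 := by
          intro h; rw [h] at hpos; norm_num at hpos
        field_simp
  have h3 := ENNReal.ofReal_le_ofReal h2
  rw [ENNReal.ofReal_mul (by positivity), ENNReal.ofReal_mul (by norm_num),
    ENNReal.ofReal_pow (norm_nonneg _), ENNReal.ofReal_pow (norm_nonneg _), ofReal_norm,
    ofReal_norm] at h3
  refine h3.trans ?_
  have h4 : ‖N‖ₑ ≤ ‖equatorCoeff h m‖ₑ +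
      ∑' k : ℕ, ‖bCoef f (m.natAbs + 2 * k) m * ((PzeroM m k : ℝ) : ℂ)‖ₑ := by
    rw [hN]
    refine enorm_sub_le.trans ?_
    gcongr
    exact enorm_tsum_le_tsum_enorm
  calc ofReal 32 * ‖N‖ₑ ^ 2 ≤ ofReal 32 * (4 * (‖equatorCoeff h m‖ₑ ^ 2 +
        (∑' k : ℕ, ‖bCoef f (m.natAbs + 2 * k) m * ((PzeroM m k : ℝ) : ℂ)‖ₑ) ^ 2)) := by
        gcongr
        refine le_trans ?_ (ennreal_add_sq _ _)
        gcongr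
    _ = _ := by
        rw [← mul_assoc]; congr 1
        norm_num

end

section

/-- combined weight. -/
def Wt (s M L : ℝ) : ℝ := L ^ (2 * s) + M ^ 2 * L ^ (2 * max (s - 1 / 2) 0)

lemma Wt_lower (s M n : ℝ) (hs : 0 ≤ s) (hM : 0 ≤ M) (hn : 0 ≤ n) :
    (M + n + 1) ^ (2 * s + 2) / ((M + n + 1) * (n + 1)) ≤ 2 * Wt s M (M + n + 1) := by
  set L := M + n + 1 with hL
  have hL1 : 1 ≤ L := by linarith
  have hL0 : 0 < L := by linarith
  have e1 : L ^ (2 * s + 2) = L ^ (2 * s) * L * L := by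
    rw [show 2 * s + 2 = 2 * s + 1 + 1 by ring, Real.rpow_add_one hL0.ne', Real.rpow_add_one hL0.ne']
  have e2 : L ^ (2 * s) ≤ L ^ (2 * max (s - 1 / 2) 0) * L := by
    rw [← Real.rpow_add_one hL0.ne']
    apply Real.rpow_le_rpow_of_exponent_le hL1
    have := le_max_left (s - 1 / 2) 0
    linarith
  have e3 : L / (n + 1) ≤ 2 + M ^ 2 / L := by
    rw [← sub_nonneg]
    have : 2 + M ^ 2 / L - L / (n + 1) = (2 * L * (n + 1) + M ^ 2 * (n + 1) - L ^ 2) / (L * (n + 1)) := by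
      field_simp
    rw [this]
    apply div_nonneg _ (by positivity)
    rw [hL]
    nlinarith [mul_nonneg (mul_nonneg hM hM) hn, mul_nonneg hM hn]
  have hp : 0 < L ^ (2 * s) := by positivity
  have hp2 : 0 < L ^ (2 * max (s - 1 / 2) 0) := by positivity
  calc L ^ (2 * s + 2) / (L * (n + 1)) = L ^ (2 * s) * (L / (n + 1)) := by
        rw [e1]; field_simp
    _ ≤ L ^ (2 * s) * (2 + M ^ 2 / L) := by gcongr
    _ = 2 * L ^ (2 * s) + (M ^ 2 / L) * L ^ (2 * s) := by ring
    _ ≤ 2 * L ^ (2 * s) + (M ^ 2 / L) * (L ^ (2 * max (s - 1 / 2) 0) * L) := by gcongr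
    _ = 2 * L ^ (2 * s) + M ^ 2 * L ^ (2 * max (s - 1 / 2) 0) := by field_simp
    _ ≤ _ := by
      unfold Wt
      have : 0 ≤ M ^ 2 * L ^ (2 * max (s - 1 / 2) 0) := by positivity
      linarith

lemma Wt_lower2 (s : ℝ) (M : ℕ) (n : ℝ) (hs : 0 ≤ s) (hn : 0 ≤ n) :
    ((M : ℝ) + 1) ^ (2 * s + 1) ≤ 2 * Wt s M (M + n + 1) := by
  set L := (M : ℝ) + n + 1 with hL
  have hM : (0 : ℝ) ≤ M := by positivity
  have hL1 : 1 ≤ L := by linarith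
  have hL0 : 0 < L := by linarith
  have hp : 0 < L ^ (2 * s) := by positivity
  have hp2 : 0 < L ^ (2 * max (s - 1 / 2) 0) := by positivity
  have a1 : ((M : ℝ) + 1) ^ (2 * s) ≤ L ^ (2 * s) := by
    apply Real.rpow_le_rpow (by positivity) (by linarith) (by linarith)
  have a2 : ((M : ℝ) + 1) ^ (2 * s - 1) ≤ L ^ (2 * max (s - 1 / 2) 0) := by
    calc _ ≤ ((M : ℝ) + 1) ^ (2 * max (s - 1 / 2) 0) := by
          apply Real.rpow_le_rpow_of_exponent_le (by linarith)
          have := le_max_left (s - 1 / 2) 0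
          linarith
      _ ≤ _ := by
          apply Real.rpow_le_rpow (by positivity) (by linarith)
          have := le_max_right (s - 1 / 2) 0
          linarith
  have e1 : ((M : ℝ) + 1) ^ (2 * s + 1) = ((M : ℝ) + 1) ^ (2 * s) * (M + 1) := by
    rw [Real.rpow_add_one (by positivity)]
  have e2 : ((M : ℝ) + 1) ^ (2 * s) = ((M : ℝ) + 1) ^ (2 * s - 1) * (M + 1) := by
    rw [← Real.rpow_add_one (by positivity)]; ring_nf
  rcases Nat.eq_zero_or_pos M with h0 | h0
  · subst h0
    unfold Wt
    simp at *
    linarith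
  · have h1 : (1 : ℝ) ≤ M := by exact_mod_cast h0
    unfold Wt
    calc ((M : ℝ) + 1) ^ (2 * s + 1) = ((M : ℝ) + 1) ^ (2 * s) + M * ((M : ℝ) + 1) ^ (2 * s) := by
          rw [e1]; ring
      _ = ((M : ℝ) + 1) ^ (2 * s) + M * (M + 1) * ((M : ℝ) + 1) ^ (2 * s - 1) := by
          rw [e2]; ring
      _ ≤ L ^ (2 * s) + (2 * M ^ 2) * L ^ (2 * max (s - 1 / 2) 0) := by
          have : (M : ℝ) * (M + 1) ≤ 2 * M ^ 2 := by nlinarith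
          gcongr
      _ ≤ _ := by linarith

lemma Wt_lower3 (s M n : ℝ) (hs : 0 ≤ s) (hM : 0 ≤ M) (hn : 0 ≤ n) :
    (M + 1) * ((M + n + 1) ^ (2 : ℝ) / ((M + n + 1) * (n + 1))) ≤ 3 * Wt s M (M + n + 1) := by
  set L := M + n + 1 with hL
  have hL1 : 1 ≤ L := by linarith
  have hL0 : 0 < L := by linarith
  have e3 : L / (n + 1) ≤ 2 + M ^ 2 / L := by
    rw [← sub_nonneg]
    have : 2 + M ^ 2 / L - L / (n + 1) = (2 * L * (n + 1) + M ^ 2 * (n + 1) - L ^ 2) / (L * (n + 1)) := by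
      field_simp
    rw [this]
    apply div_nonneg _ (by positivity)
    rw [hL]
    nlinarith [mul_nonneg (mul_nonneg hM hM) hn, mul_nonneg hM hn]
  have hp : 1 ≤ L ^ (2 * s) := Real.one_le_rpow hL1 (by linarith)
  have hp2 : 1 ≤ L ^ (2 * max (s - 1 / 2) 0) := Real.one_le_rpow hL1 (by positivity)
  calc (M + 1) * (L ^ (2 : ℝ) / (L * (n + 1))) = (M + 1) * (L / (n + 1)) := by
        rw [Real.rpow_two]; field_simp
    _ ≤ (M + 1) * (2 + M ^ 2 / L) := by gcongr
    _ = 2 * M + 2 + M ^ 2 * ((M + 1) / L) := by ring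
    _ ≤ 2 * M + 2 + M ^ 2 * 1 := by
        gcongr
        rw [div_le_one hL0]; linarith
    _ ≤ 3 * (1 + M ^ 2 * 1) := by nlinarith [sq_nonneg (M - 1)]
    _ ≤ _ := by unfold Wt; gcongr

open ENNReal (ofReal)

/-- the total right-hand side for a given `m`. -/
def Rm (s : ℝ) (f : ℝ → ℝ → ℂ) (m : ℤ) : ENNReal :=
  ∑' n : ℕ, ofReal (Wt s m.natAbs ((m.natAbs : ℝ) + n + 1) * ‖flCoeff f (m.natAbs + n) m‖ ^ 2)

/-- the equatorial term. -/
def Hm (s : ℝ) (h : ℝ → ℂ) (m : ℤ) : ENNReal :=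
  ofReal (((m.natAbs : ℝ) + 1) ^ (2 * (s + 3 / 4)) * ‖equatorCoeff h m‖ ^ 2)

lemma b_est1 (s : ℝ) (hs : 0 ≤ s) : ∃ K : ENNReal, K ≠ ⊤ ∧ ∀ (f : ℝ → ℝ → ℂ) (m : ℤ),
    ∑' n : ℕ, ofReal (((m.natAbs : ℝ) + n + 1) ^ (2 * s + 2) * ‖bCoef f (m.natAbs + n) m‖ ^ 2) ≤
    K * Rm s f m := by
  obtain ⟨K, hK, h⟩ := b_sum (2 * s + 2) (by linarith)
  refine ⟨K * 2, ENNReal.mul_ne_top hK (by simp), fun f m => (h f m).trans ?_⟩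
  rw [mul_assoc]
  gcongr
  rw [Rm, ← ENNReal.tsum_mul_left]
  refine ENNReal.tsum_le_tsum fun n => ?_
  rw [show (2 : ENNReal) = ofReal 2 by simp, ← ENNReal.ofReal_mul (by norm_num)]
  apply ENNReal.ofReal_le_ofReal
  have h1 := aCoef_bound f m n
  have h2 := Wt_lower s m.natAbs n hs (by positivity) (by positivity)
  calc _ ≤ ((m.natAbs : ℝ) + n + 1) ^ (2 * s + 2) * (‖flCoeff f (m.natAbs + n) m‖ ^ 2 /
      (((m.natAbs : ℝ) + n + 1) * (n + 1))) := by gcongr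
    _ = ((m.natAbs : ℝ) + n + 1) ^ (2 * s + 2) / (((m.natAbs : ℝ) + n + 1) * (n + 1)) *
      ‖flCoeff f (m.natAbs + n) m‖ ^ 2 := by ring
    _ ≤ _ := by rw [← mul_assoc]; gcongr

lemma b_est2 (s : ℝ) (hs : 0 ≤ s) : ∃ K : ENNReal, K ≠ ⊤ ∧ ∀ (f : ℝ → ℝ → ℂ) (m : ℤ),
    ∑' n : ℕ, ofReal (((m.natAbs : ℝ) + 1) * (((m.natAbs : ℝ) + n + 1) ^ (2 : ℝ) *
      ‖bCoef f (m.natAbs + n) m‖ ^ 2)) ≤ K * Rm s f m := by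
  obtain ⟨K, hK, h⟩ := b_sum 2 (by norm_num)
  refine ⟨K * 3, ENNReal.mul_ne_top hK (by simp), fun f m => ?_⟩
  have h' := mul_le_mul_right (h f m) (ofReal ((m.natAbs : ℝ) + 1))
  simp_rw [ENNReal.ofReal_mul (show (0 : ℝ) ≤ (m.natAbs : ℝ) + 1 by positivity),
    ENNReal.tsum_mul_left]
  refine h'.trans ?_
  rw [mul_left_comm, mul_assoc]
  refine mul_le_mul' le_rfl ?_
  rw [Rm, ← ENNReal.tsum_mul_left, ← ENNReal.tsum_mul_left]
  refine ENNReal.tsum_le_tsum fun n => ?_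
  rw [show (3 : ENNReal) = ofReal 3 by simp, ← ENNReal.ofReal_mul (by positivity),
    ← ENNReal.ofReal_mul (by positivity)]
  apply ENNReal.ofReal_le_ofReal
  have h1 := aCoef_bound f m n
  have h2 := Wt_lower3 s m.natAbs n hs (by positivity) (by positivity)
  calc _ ≤ ((m.natAbs : ℝ) + 1) * (((m.natAbs : ℝ) + n + 1) ^ (2 : ℝ) *
        (‖flCoeff f (m.natAbs + n) m‖ ^ 2 /
      (((m.natAbs : ℝ) + n + 1) * (n + 1)))) := by gcongr
    _ = ((m.natAbs : ℝ) + 1) * (((m.natAbs : ℝ) + n + 1) ^ (2 : ℝ) /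
        (((m.natAbs : ℝ) + n + 1) * (n + 1))) * ‖flCoeff f (m.natAbs + n) m‖ ^ 2 := by ring
    _ ≤ _ := by rw [← mul_assoc]; gcongr

lemma aT_est (s : ℝ) (hs : 0 ≤ s) : ∃ K : ENNReal, K ≠ ⊤ ∧ ∀ (f : ℝ → ℝ → ℂ) (h : ℝ → ℂ) (m : ℤ),
    ofReal (((m.natAbs : ℝ) + 1) ^ (2 * s + 2)) * ‖aTilde f h m‖ₑ ^ 2 ≤ K * (Hm s h m + Rm s f m) := by
  obtain ⟨K, hK, hS⟩ := S_sum
  refine ⟨128 * (1 + K * 2), ENNReal.mul_ne_top (by simp) (ENNReal.add_ne_top.mpr ⟨by simp,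
    ENNReal.mul_ne_top hK (by simp)⟩), fun f h m => ?_⟩
  have h1 := aTilde_bound f h m
  set S := (∑' k : ℕ, ‖bCoef f (m.natAbs + 2 * k) m * ((PzeroM m k : ℝ) : ℂ)‖ₑ) with hSd
  have e1 : ((m.natAbs : ℝ) + 1) ^ (2 * s + 2) = ((m.natAbs : ℝ) + 1) ^ (2 * (s + 3 / 4)) *
      ((m.natAbs : ℝ) + 1) ^ (1 / 2 : ℝ) := by
    rw [← Real.rpow_add (by positivity)]; ring_nf
  have e2 : ((m.natAbs : ℝ) + 1) ^ (2 * (s + 3 / 4)) = ((m.natAbs : ℝ) + 1) ^ (2 * s + 1) *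
      ((m.natAbs : ℝ) + 1) ^ (1 / 2 : ℝ) := by
    rw [← Real.rpow_add (by positivity)]; ring_nf
  have e3 : ofReal (((m.natAbs : ℝ) + 1) ^ (2 * (s + 3 / 4))) * ‖equatorCoeff h m‖ₑ ^ 2 = Hm s h m := by
    rw [Hm, ENNReal.ofReal_mul (by positivity), ENNReal.ofReal_pow (norm_nonneg _), ofReal_norm]
  have e4 : ofReal (((m.natAbs : ℝ) + 1) ^ (2 * (s + 3 / 4))) * S ^ 2 ≤ K * 2 * Rm s f m := by
    rw [e2, ENNReal.ofReal_mul (by positivity), mul_assoc]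
    calc _ ≤ ofReal (((m.natAbs : ℝ) + 1) ^ (2 * s + 1)) *
          (K * ∑' n : ℕ, ofReal (‖flCoeff f (m.natAbs + n) m‖ ^ 2)) := by
          exact mul_le_mul' le_rfl (hS f m)
      _ = K * ∑' n : ℕ, ofReal (((m.natAbs : ℝ) + 1) ^ (2 * s + 1) *
          ‖flCoeff f (m.natAbs + n) m‖ ^ 2) := by
          rw [mul_left_comm, ← ENNReal.tsum_mul_left]
          congr 2; ext n; rw [ENNReal.ofReal_mul (by positivity)]
      _ ≤ _ := by
          rw [mul_assoc, Rm, ← ENNReal.tsum_mul_left (a := 2)]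
          gcongr with n
          rw [show (2 : ENNReal) = ofReal 2 by simp, ← ENNReal.ofReal_mul (by norm_num)]
          apply ENNReal.ofReal_le_ofReal
          rw [← mul_assoc]
          gcongr
          exact Wt_lower2 s m.natAbs n hs (by positivity)
  calc _ = ofReal (((m.natAbs : ℝ) + 1) ^ (2 * (s + 3 / 4))) *
        (ofReal (((m.natAbs : ℝ) + 1) ^ (1 / 2 : ℝ)) * ‖aTilde f h m‖ₑ ^ 2) := by
        rw [e1, ENNReal.ofReal_mul (by positivity), mul_assoc]
    _ ≤ ofReal (((m.natAbs : ℝ) + 1) ^ (2 * (s + 3 / 4))) *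
        (128 * (‖equatorCoeff h m‖ₑ ^ 2 + S ^ 2)) := by gcongr
    _ = 128 * (ofReal (((m.natAbs : ℝ) + 1) ^ (2 * (s + 3 / 4))) * ‖equatorCoeff h m‖ₑ ^ 2 +
        ofReal (((m.natAbs : ℝ) + 1) ^ (2 * (s + 3 / 4))) * S ^ 2) := by ring
    _ ≤ 128 * (1 * Hm s h m + K * 2 * Rm s f m) := by
        rw [e3, one_mul]; gcongr
    _ ≤ 128 * ((1 + K * 2) * Hm s h m + (1 + K * 2) * Rm s f m) := by
        gcongr
        · exact le_self_add
        · exact le_add_self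
    _ = _ := by ring

lemma cCoef_bound (f : ℝ → ℝ → ℂ) (h : ℝ → ℂ) (m : ℤ) (n : ℕ) :
    ‖cCoef f h (m.natAbs + n) m‖ ≤ (1 / 3) ^ (n / 2) * ‖aTilde f h m‖ ∧
    (n % 2 ≠ 0 → cCoef f h (m.natAbs + n) m = 0) := by
  rw [cCoef]
  have e : m.natAbs + n - m.natAbs = n := by omega
  rw [e]
  constructor
  · split_ifs with hh
    · rw [norm_mul, Complex.norm_real, Real.norm_eq_abs]
      gcongr
      exact (Gamma_sign m _).2
    · simp
  · intro hn
    simp [hn]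

lemma cCoef_bound1 (f : ℝ → ℝ → ℂ) (h : ℝ → ℂ) (m : ℤ) (n : ℕ) :
    ‖cCoef f h (m.natAbs + n) m‖ ^ 2 ≤ (1 / 3) ^ n * ‖aTilde f h m‖ ^ 2 ∧
    ‖cCoef f h (m.natAbs + n) m‖ ≤ (3 / 5) ^ n * ‖aTilde f h m‖ := by
  obtain ⟨h1, h2⟩ := cCoef_bound f h m n
  by_cases hn : n % 2 = 0
  · obtain ⟨k, rfl⟩ : ∃ k, n = 2 * k := ⟨n / 2, by omega⟩
    have e : 2 * k / 2 = k := by omega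
    rw [e] at h1
    constructor
    · have := pow_le_pow_left₀ (norm_nonneg _) h1 2
      rw [mul_pow, ← pow_mul, mul_comm k 2] at this
      exact this
    · refine h1.trans ?_
      rw [pow_mul]
      gcongr
      norm_num
  · rw [h2 hn]
    constructor
    · simp
    · simp; positivity

lemma c_est1 (s : ℝ) (hs : 0 ≤ s) : ∃ K : ENNReal, K ≠ ⊤ ∧ ∀ (f : ℝ → ℝ → ℂ) (h : ℝ → ℂ) (m : ℤ),
    ∑' n : ℕ, ofReal (((m.natAbs : ℝ) + n + 1) ^ (2 * s + 2) * ‖cCoef f h (m.natAbs + n) m‖ ^ 2) ≤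
    K * (Hm s h m + Rm s f m) := by
  obtain ⟨K, hK, h⟩ := aT_est s hs
  refine ⟨(∑' j : ℕ, ofReal (1 / 3) ^ j * ofReal ((2 * (j : ℝ) + 2) ^ (2 * s + 2))) * K,
    ENNReal.mul_ne_top (geo_fin _ _ (by linarith) (by norm_num) (by norm_num)) hK,
    fun f g m => ?_⟩
  rw [mul_assoc]
  refine le_trans ?_ (mul_le_mul_right (h f g m) _)
  rw [← ENNReal.tsum_mul_right]
  refine ENNReal.tsum_le_tsum fun n => ?_
  rw [← ofReal_norm, ← ENNReal.ofReal_pow (by positivity), ← ENNReal.ofReal_pow (by positivity),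
    ← ENNReal.ofReal_mul (by positivity), ← ENNReal.ofReal_mul (by positivity),
    ← ENNReal.ofReal_mul (by positivity)]
  apply ENNReal.ofReal_le_ofReal
  have h1 := (cCoef_bound1 f g m n).1
  have h2 : ((m.natAbs : ℝ) + n + 1) ^ (2 * s + 2) ≤ (2 * (n : ℝ) + 2) ^ (2 * s + 2) *
      ((m.natAbs : ℝ) + 1) ^ (2 * s + 2) := by
    rw [← Real.mul_rpow (by positivity) (by positivity)]
    apply Real.rpow_le_rpow (by positivity) _ (by linarith)
    have hM : (0 : ℝ) ≤ m.natAbs := by positivity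
    have hn : (0 : ℝ) ≤ n := by positivity
    nlinarith [mul_nonneg hM hn]
  calc _ ≤ ((2 * (n : ℝ) + 2) ^ (2 * s + 2) * ((m.natAbs : ℝ) + 1) ^ (2 * s + 2)) *
        ((1 / 3) ^ n * ‖aTilde f g m‖ ^ 2) := by gcongr
    _ = _ := by ring

lemma c_est2 (s : ℝ) (hs : 0 ≤ s) : ∃ K : ENNReal, K ≠ ⊤ ∧ ∀ (f : ℝ → ℝ → ℂ) (h : ℝ → ℂ) (m : ℤ),
    ∑' n : ℕ, ‖cCoef f h (m.natAbs + n) m‖ₑ ≤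
    K * (ofReal (((m.natAbs : ℝ) + 1) ^ (-(3 / 2) : ℝ)) + (Hm s h m + Rm s f m)) := by
  obtain ⟨K, hK, h⟩ := aT_est s hs
  set G := ∑' j : ℕ, ofReal (3 / 5) ^ j * ofReal ((2 * (j : ℝ) + 2) ^ (0 : ℝ)) with hG
  refine ⟨G * (1 + K),
    ENNReal.mul_ne_top (geo_fin _ _ (by linarith) (by norm_num) (by norm_num))
      (ENNReal.add_ne_top.mpr ⟨by simp, hK⟩),
    fun f g m => ?_⟩
  have h1 : ∑' n : ℕ, ‖cCoef f g (m.natAbs + n) m‖ₑ ≤ G * ‖aTilde f g m‖ₑ := by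
    rw [hG, ← ENNReal.tsum_mul_right]
    refine ENNReal.tsum_le_tsum fun n => ?_
    rw [← ofReal_norm, ← ofReal_norm, Real.rpow_zero, ENNReal.ofReal_one, mul_one,
      ← ENNReal.ofReal_pow (by positivity), ← ENNReal.ofReal_mul (by positivity)]
    exact ENNReal.ofReal_le_ofReal (cCoef_bound1 f g m n).2
  have h2 : ‖aTilde f g m‖ₑ ≤ ofReal (((m.natAbs : ℝ) + 1) ^ (-(3 / 2) : ℝ)) +
      ofReal (((m.natAbs : ℝ) + 1) ^ (2 * s + 2)) * ‖aTilde f g m‖ₑ ^ 2 := by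
    rw [← ofReal_norm, ← ENNReal.ofReal_pow (by positivity), ← ENNReal.ofReal_mul (by positivity),
      ← ENNReal.ofReal_add (by positivity) (by positivity)]
    apply ENNReal.ofReal_le_ofReal
    have hM : (0 : ℝ) ≤ m.natAbs := by positivity
    have h3 : ((m.natAbs : ℝ) + 1) ^ (3 / 2 : ℝ) ≤ ((m.natAbs : ℝ) + 1) ^ (2 * s + 2) :=
      Real.rpow_le_rpow_of_exponent_le (by linarith) (by linarith)
    have hp : 0 < ((m.natAbs : ℝ) + 1) ^ (3 / 2 : ℝ) := by positivity
    rw [Real.rpow_neg (by positivity)]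
    generalize ((m.natAbs : ℝ) + 1) ^ (3 / 2 : ℝ) = w at *
    generalize ‖aTilde f g m‖ = x at *
    calc x ≤ w⁻¹ + w * x ^ 2 := by
          have : w⁻¹ + w * x ^ 2 - x = w⁻¹ * ((w * x - 1 / 2) ^ 2 + 3 / 4) := by
            field_simp; ring
          have : 0 ≤ w⁻¹ * ((w * x - 1 / 2) ^ 2 + 3 / 4) := by positivity
          linarith
      _ ≤ _ := by gcongr
  calc _ ≤ G * ‖aTilde f g m‖ₑ := h1
    _ ≤ G * (ofReal (((m.natAbs : ℝ) + 1) ^ (-(3 / 2) : ℝ)) + K * (Hm s g m + Rm s f m)) := by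
        gcongr
        refine h2.trans ?_
        exact add_le_add le_rfl (h f g m)
    _ ≤ G * ((1 + K) * ofReal (((m.natAbs : ℝ) + 1) ^ (-(3 / 2) : ℝ)) +
          (1 + K) * (Hm s g m + Rm s f m)) := by
        gcongr
        · rw [add_mul, one_mul]; exact le_self_add
        · exact le_add_self
    _ = _ := by ring

lemma b_est3 (s : ℝ) (hs : 0 ≤ s) : ∃ K : ENNReal, K ≠ ⊤ ∧ ∀ (f : ℝ → ℝ → ℂ) (m : ℤ),
    ∑' n : ℕ, ‖bCoef f (m.natAbs + n) m‖ₑ ≤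
    K * (ofReal (((m.natAbs : ℝ) + 1) ^ (-(3 / 2) : ℝ)) + Rm s f m) := by
  obtain ⟨K, hK, h⟩ := b_est2 s hs
  set Z := ∑' i : ℕ, ofReal (((i : ℝ) + 1) ^ (-(3 / 2) : ℝ)) with hZ
  refine ⟨Z + K, ENNReal.add_ne_top.mpr ⟨zsum32, hK⟩, fun f m => ?_⟩
  calc _ ≤ ∑' n : ℕ, (ofReal (((n : ℝ) + 1) ^ (-(3 / 2) : ℝ)) *
            ofReal (((m.natAbs : ℝ) + 1) ^ (-(3 / 2) : ℝ)) +
          ofReal (((m.natAbs : ℝ) + 1) * (((m.natAbs : ℝ) + n + 1) ^ (2 : ℝ) *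
      ‖bCoef f (m.natAbs + n) m‖ ^ 2))) := by
        refine ENNReal.tsum_le_tsum fun n => ?_
        rw [← ofReal_norm, ← ENNReal.ofReal_mul (by positivity),
          ← ENNReal.ofReal_add (by positivity) (by positivity)]
        apply ENNReal.ofReal_le_ofReal
        have hM : (0 : ℝ) ≤ m.natAbs := by positivity
        have hn : (0 : ℝ) ≤ n := by positivity
        rw [Real.rpow_neg (by positivity), Real.rpow_neg (by positivity), ← mul_inv]
        have h3 : ((n : ℝ) + 1) ^ (3 / 2 : ℝ) * ((m.natAbs : ℝ) + 1) ^ (3 / 2 : ℝ) ≤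
            ((m.natAbs : ℝ) + 1) * ((m.natAbs : ℝ) + n + 1) ^ (2 : ℝ) := by
          have e1 : ((m.natAbs : ℝ) + 1) ^ (3 / 2 : ℝ) =
              ((m.natAbs : ℝ) + 1) * ((m.natAbs : ℝ) + 1) ^ (1 / 2 : ℝ) := by
            rw [mul_comm, ← Real.rpow_add_one (by positivity)]; norm_num
          have e2 : ((m.natAbs : ℝ) + n + 1) ^ (2 : ℝ) =
              ((m.natAbs : ℝ) + n + 1) ^ (3 / 2 : ℝ) * ((m.natAbs : ℝ) + n + 1) ^ (1 / 2 : ℝ) := by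
            rw [← Real.rpow_add (by positivity)]; norm_num
          rw [e1, e2, mul_left_comm]
          gcongr <;> linarith
        have hp : 0 < ((n : ℝ) + 1) ^ (3 / 2 : ℝ) * ((m.natAbs : ℝ) + 1) ^ (3 / 2 : ℝ) := by
          positivity
        rw [← mul_assoc]
        generalize ((n : ℝ) + 1) ^ (3 / 2 : ℝ) * ((m.natAbs : ℝ) + 1) ^ (3 / 2 : ℝ) = w at *
        generalize ‖bCoef f (m.natAbs + n) m‖ = x at *
        calc x ≤ w⁻¹ + w * x ^ 2 := by
              have : w⁻¹ + w * x ^ 2 - x = w⁻¹ * ((w * x - 1 / 2) ^ 2 + 3 / 4) := by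
                field_simp; ring
              have : 0 ≤ w⁻¹ * ((w * x - 1 / 2) ^ 2 + 3 / 4) := by positivity
              linarith
          _ ≤ _ := by gcongr
    _ ≤ Z * ofReal (((m.natAbs : ℝ) + 1) ^ (-(3 / 2) : ℝ)) + K * Rm s f m := by
        rw [ENNReal.tsum_add, ENNReal.tsum_mul_right]
        gcongr
        exact h f m
    _ ≤ (Z + K) * ofReal (((m.natAbs : ℝ) + 1) ^ (-(3 / 2) : ℝ)) + (Z + K) * Rm s f m := by
        gcongr
        · exact le_self_add
        · exact le_add_self
    _ = _ := by ring

end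

section

open ENNReal (ofReal)

lemma reindex_le (G : ℕ × ℤ → ENNReal) :
    ∑' m : ℤ, ∑' n : ℕ, G (m.natAbs + n, m) ≤ ∑' p, G p := by
  calc _ ≤ ∑' m : ℤ, ∑' l : ℕ, G (l, m) := ENNReal.tsum_le_tsum fun m =>
        ENNReal.tsum_comp_le_tsum_of_injective (add_right_injective m.natAbs) (fun l => G (l, m))
    _ = _ := by rw [ENNReal.tsum_prod', ENNReal.tsum_comm]

lemma reindex_eq (G : ℕ × ℤ → ENNReal) (h : ∀ l m, l < m.natAbs → G (l, m) = 0) :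
    ∑' p, G p = ∑' m : ℤ, ∑' n : ℕ, G (m.natAbs + n, m) := by
  rw [ENNReal.tsum_prod', ENNReal.tsum_comm]
  congr 1; ext m
  rw [← Summable.sum_add_tsum_nat_add' (f := fun l => G (l, m)) (k := m.natAbs) ENNReal.summable]
  rw [Finset.sum_eq_zero, zero_add]
  · simp_rw [add_comm]
  · intro l hl
    exact h l m (Finset.mem_range.mp hl)

/-- the coefficients of the trace. -/
def dCoef (f : ℝ → ℝ → ℂ) (h : ℝ → ℂ) (p : ℕ × ℤ) : ℂ := bCoef f p.1 p.2 + cCoef f h p.1 p.2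

lemma bCoef_zero (f : ℝ → ℝ → ℂ) (l : ℕ) (m : ℤ) (hl : l < m.natAbs) : bCoef f l m = 0 := by
  rw [bCoef, show l + 1 - m.natAbs = 0 by omega]; rfl

lemma cCoef_zero (f : ℝ → ℝ → ℂ) (h : ℝ → ℂ) (l : ℕ) (m : ℤ) (hl : l < m.natAbs) :
    cCoef f h l m = 0 := by
  rw [cCoef, if_neg]; omega

lemma dCoef_zero (f : ℝ → ℝ → ℂ) (h : ℝ → ℂ) (l : ℕ) (m : ℤ) (hl : l < m.natAbs) :
    dCoef f h (l, m) = 0 := by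
  rw [dCoef, bCoef_zero f l m hl, cCoef_zero f h l m hl, add_zero]

lemma Rm_sum (s : ℝ) (f : ℝ → ℝ → ℂ) : ∑' m : ℤ, Rm s f m ≤
    ∑' p : ℕ × ℤ, ofReal (Wt s p.2.natAbs ((p.1 : ℝ) + 1) * ‖flCoeff f p.1 p.2‖ ^ 2) := by
  refine le_trans (le_of_eq ?_) (reindex_le _)
  simp only [Rm]
  push_cast
  rfl

lemma seq_est1 (s : ℝ) (hs : 0 ≤ s) : ∃ K : ENNReal, K ≠ ⊤ ∧ ∀ (f : ℝ → ℝ → ℂ) (h : ℝ → ℂ),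
    ∑' p : ℕ × ℤ, ofReal (((p.1 : ℝ) + 1) ^ (2 * (s + 1)) * ‖dCoef f h p‖ ^ 2) ≤
    K * (∑' m : ℤ, Hm s h m +
      ∑' p : ℕ × ℤ, ofReal (Wt s p.2.natAbs ((p.1 : ℝ) + 1) * ‖flCoeff f p.1 p.2‖ ^ 2)) := by
  obtain ⟨K1, hK1, h1⟩ := b_est1 s hs
  obtain ⟨K2, hK2, h2⟩ := c_est1 s hs
  refine ⟨2 * (K1 + K2), ENNReal.mul_ne_top (by simp) (ENNReal.add_ne_top.mpr ⟨hK1, hK2⟩),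
    fun f h => ?_⟩
  rw [reindex_eq _ (fun l m hl => by simp [dCoef_zero f h l m hl])]
  calc _ ≤ ∑' m : ℤ, 2 * (K1 + K2) * (Hm s h m + Rm s f m) := by
        refine ENNReal.tsum_le_tsum fun m => ?_
        calc _ ≤ ∑' n : ℕ, 2 * (ofReal (((m.natAbs : ℝ) + n + 1) ^ (2 * s + 2) *
              ‖bCoef f (m.natAbs + n) m‖ ^ 2) + ofReal (((m.natAbs : ℝ) + n + 1) ^ (2 * s + 2) *
              ‖cCoef f h (m.natAbs + n) m‖ ^ 2)) := by
              refine ENNReal.tsum_le_tsum fun n => ?_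
              rw [← ENNReal.ofReal_add (by positivity) (by positivity),
                show (2 : ENNReal) = ofReal 2 by simp, ← ENNReal.ofReal_mul (by positivity)]
              apply ENNReal.ofReal_le_ofReal
              simp only [dCoef]
              push_cast
              rw [show 2 * (s + 1) = 2 * s + 2 by ring, ← mul_add, mul_left_comm]
              gcongr
              have := pow_le_pow_left₀ (norm_nonneg _)
                (norm_add_le (bCoef f (m.natAbs + n) m) (cCoef f h (m.natAbs + n) m)) 2
              nlinarith [sq_nonneg (‖bCoef f (m.natAbs + n) m‖ - ‖cCoef f h (m.natAbs + n) m‖)]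
          _ ≤ 2 * (K1 * Rm s f m + K2 * (Hm s h m + Rm s f m)) := by
              rw [ENNReal.tsum_mul_left, ENNReal.tsum_add]
              exact mul_le_mul' le_rfl (add_le_add (h1 f m) (h2 f h m))
          _ ≤ 2 * (K1 * (Hm s h m + Rm s f m) + K2 * (Hm s h m + Rm s f m)) := by
              gcongr
              exact le_add_self
          _ = _ := by ring
    _ ≤ _ := by
        rw [ENNReal.tsum_mul_left, ENNReal.tsum_add]
        gcongr
        exact Rm_sum s f

lemma seq_est2 (s : ℝ) (hs : 0 ≤ s) : ∃ K : ENNReal, K ≠ ⊤ ∧ ∀ (f : ℝ → ℝ → ℂ) (h : ℝ → ℂ),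
    ∑' p : ℕ × ℤ, ‖dCoef f h p‖ₑ ≤
    K * (∑' m : ℤ, ofReal (((m.natAbs : ℝ) + 1) ^ (-(3 / 2) : ℝ)) + (∑' m : ℤ, Hm s h m +
      ∑' p : ℕ × ℤ, ofReal (Wt s p.2.natAbs ((p.1 : ℝ) + 1) * ‖flCoeff f p.1 p.2‖ ^ 2))) := by
  obtain ⟨K1, hK1, h1⟩ := b_est3 s hs
  obtain ⟨K2, hK2, h2⟩ := c_est2 s hs
  refine ⟨(K1 + K2), (ENNReal.add_ne_top.mpr ⟨hK1, hK2⟩),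
    fun f h => ?_⟩
  rw [reindex_eq _ (fun l m hl => by simp [dCoef_zero f h l m hl])]
  calc _ ≤ ∑' m : ℤ, (K1 + K2) * (ofReal (((m.natAbs : ℝ) + 1) ^ (-(3 / 2) : ℝ)) +
          (Hm s h m + Rm s f m)) := by
        refine ENNReal.tsum_le_tsum fun m => ?_
        calc _ ≤ ∑' n : ℕ, (‖bCoef f (m.natAbs + n) m‖ₑ + ‖cCoef f h (m.natAbs + n) m‖ₑ) := by
              refine ENNReal.tsum_le_tsum fun n => ?_
              exact enorm_add_le _ _
          _ ≤ K1 * (ofReal (((m.natAbs : ℝ) + 1) ^ (-(3 / 2) : ℝ)) + Rm s f m) +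
              K2 * (ofReal (((m.natAbs : ℝ) + 1) ^ (-(3 / 2) : ℝ)) + (Hm s h m + Rm s f m)) := by
              rw [ENNReal.tsum_add]
              exact (add_le_add (h1 f m) (h2 f h m))
          _ ≤ K1 * (ofReal (((m.natAbs : ℝ) + 1) ^ (-(3 / 2) : ℝ)) + (Hm s h m + Rm s f m)) +
              K2 * (ofReal (((m.natAbs : ℝ) + 1) ^ (-(3 / 2) : ℝ)) + (Hm s h m + Rm s f m)) := by
              gcongr
              exact le_add_self
          _ = _ := by ring
    _ ≤ _ := by
        rw [ENNReal.tsum_mul_left, ENNReal.tsum_add, ENNReal.tsum_add]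
        gcongr
        exact Rm_sum s f

lemma zsum32Z : ∑' m : ℤ, ofReal (((m.natAbs : ℝ) + 1) ^ (-(3 / 2) : ℝ)) ≠ ⊤ := by
  have h : Summable fun n : ℕ => ((n : ℝ)) ^ (-(3 / 2) : ℝ) :=
    Real.summable_nat_rpow.mpr (by norm_num)
  have h1 := (summable_nat_add_iff 1).mpr h
  have : Summable fun m : ℤ => (((m.natAbs : ℝ) + 1) ^ (-(3 / 2) : ℝ)) := by
    apply Summable.of_nat_of_neg
    · simpa using h1
    · simpa using h1
  exact this.tsum_ofReal_ne_top

end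

section

open Polynomial in
lemma poly_int (p : ℝ[X]) (a b : ℝ) : IntervalIntegrable (fun x => p.eval x) volume a b :=
  p.continuous.intervalIntegrable a b

open Polynomial in
lemma poly_ibp1 (p q : ℝ[X]) (h1 : (p * q).eval 1 = 0) (h2 : (p * q).eval (-1) = 0) :
    ∫ x in (-1:ℝ)..1, (derivative p).eval x * q.eval x =
      - ∫ x in (-1:ℝ)..1, p.eval x * (derivative q).eval x := by
  have := intervalIntegral.integral_deriv_mul_eq_sub (a := (-1:ℝ)) (b := 1)
    (u := fun x => p.eval x) (v := fun x => q.eval x)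
    (u' := fun x => (derivative p).eval x) (v' := fun x => (derivative q).eval x)
    (fun x _ => p.hasDerivAt x) (fun x _ => q.hasDerivAt x) (poly_int _ _ _) (poly_int _ _ _)
  rw [intervalIntegral.integral_add] at this
  · rw [eval_mul] at h1 h2
    rw [h1, h2] at this
    linarith
  · exact ((derivative p).continuous.mul q.continuous).intervalIntegrable _ _
  · exact (p.continuous.mul (derivative q).continuous).intervalIntegrable _ _

open Polynomial in
lemma poly_ibp (n : ℕ) (p q : ℝ[X])
    (h : ∀ i j, i + j + 1 = n → (derivative^[i] p * derivative^[j] q).eval 1 = 0 ∧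
      (derivative^[i] p * derivative^[j] q).eval (-1) = 0) :
    ∫ x in (-1:ℝ)..1, (derivative^[n] p).eval x * q.eval x =
      (-1)^n * ∫ x in (-1:ℝ)..1, p.eval x * (derivative^[n] q).eval x := by
  induction n generalizing q with
  | zero => simp
  | succ n ih =>
    have h0 := h n 0 (by omega)
    rw [Function.iterate_succ_apply', poly_ibp1 _ _ (by simpa using h0.1) (by simpa using h0.2),
      ih (derivative q), ← Function.iterate_succ_apply, pow_succ]
    · ring
    · intro i j hij
      have := h i (j+1) (by omega)
      simpa only [Function.iterate_succ_apply] using this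

open Polynomial in
lemma vanish_deriv (p q : ℝ[X]) (M j : ℕ) (hj : j < M) (x : ℝ) (hx : p.eval x = 0)
    (hd : p ^ M ∣ q) : (derivative^[j] q).eval x = 0 := by
  have h1 := pow_sub_dvd_iterate_derivative_of_pow_dvd (n := M) j hd
  have h2 : p ∣ derivative^[j] q := (dvd_pow_self p (by omega)).trans h1
  obtain ⟨r, hr⟩ := h2
  rw [hr, eval_mul, hx, zero_mul]

open Polynomial in
lemma int_one_sub_sq (l : ℕ) : ∫ x in (-1:ℝ)..1, (1 - x^2)^l =
    2^(2*l+1) * (l.factorial:ℝ)^2 / ((2*l+1).factorial : ℝ) := by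
  induction l with
  | zero => norm_num
  | succ l ih =>
    have hd : ∀ x ∈ Set.uIcc (-1:ℝ) 1, HasDerivAt (fun x : ℝ => x * (1-x^2)^(l+1))
        ((2*l+3) * (1-x^2)^(l+1) - (2*l+2) * (1-x^2)^l) x := by
      intro x _
      have h1 : HasDerivAt (fun x : ℝ => 1 - x^2) (-(2*x)) x := by
        simpa using ((hasDerivAt_id x).pow 2).const_sub 1
      have := (hasDerivAt_id x).mul (h1.pow (l+1))
      refine (HasDerivAt.congr_deriv this ?_)
      simp only [id, Nat.add_sub_cancel, Pi.pow_apply]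
      push_cast
      ring
    have h2 := intervalIntegral.integral_eq_sub_of_hasDerivAt hd
      (by apply Continuous.intervalIntegrable; fun_prop)
    rw [intervalIntegral.integral_sub (by apply Continuous.intervalIntegrable; fun_prop)
      (by apply Continuous.intervalIntegrable; fun_prop), intervalIntegral.integral_const_mul,
      intervalIntegral.integral_const_mul, ih] at h2
    norm_num at h2
    have h3 : ∫ x in (-1:ℝ)..1, (1-x^2)^(l+1) = (2*l+2)/(2*l+3) *
      (2^(2*l+1) * (l.factorial:ℝ)^2 / ((2*l+1).factorial : ℝ)) := by
      have : (2*(l:ℝ)+3) ≠ 0 := by positivity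
      field_simp
      field_simp at h2
      linarith
    rw [h3, show 2*(l+1)+1 = (2*l+1)+1+1 by ring, Nat.factorial_succ (2*l+1+1), Nat.factorial_succ (2*l+1),
      Nat.factorial_succ l]
    push_cast
    have : ((2*l+1).factorial : ℝ) ≠ 0 := by positivity
    field_simp
    ring

open Polynomial in
lemma natDegree_dleg (l M : ℕ) : (derivative^[M] (legendreP l)).natDegree ≤ l - M := by
  refine (natDegree_iterate_derivative _ _).trans (Nat.sub_le_sub_right ?_ _)
  rw [legendreP]
  refine (natDegree_C_mul_le _ _).trans ((natDegree_iterate_derivative _ _).trans ?_)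
  have : ((X^2 - 1 : ℝ[X])^l).natDegree ≤ l * 2 := by
    refine natDegree_pow_le.trans (Nat.mul_le_mul_left _ ?_)
    compute_degree
  omega

open Polynomial in
lemma dleg_zero (l M : ℕ) (h : l < M) : derivative^[M] (legendreP l) = 0 := by
  apply iterate_derivative_eq_zero
  have := natDegree_dleg l 0
  simp only [Function.iterate_zero, id] at this
  omega

open Polynomial in
lemma natDegree_omx (M : ℕ) : ((1 - X^2 : ℝ[X])^M).natDegree ≤ M * 2 := by
  refine natDegree_pow_le.trans (Nat.mul_le_mul_left _ ?_)
  compute_degree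

open Polynomial in
lemma coeff_dleg (l M : ℕ) (h : M ≤ l) : (derivative^[M] (legendreP l)).coeff (l - M) =
    (2^l * l.factorial : ℝ)⁻¹ * ((2*l).factorial / (l-M).factorial) := by
  rw [deriv_legendre, coeff_C_mul, coeff_iterate_derivative]
  have h1 : l - M + (M + l) = l * 2 := by omega
  have h2 : ((X^2 - 1 : ℝ[X])^l).coeff (l*2) = 1 := by
    rw [coeff_pow_of_natDegree_le (m := l) (n := 2) (by compute_degree)]
    simp [coeff_one]
  rw [h1, h2]
  congr 1
  have h3 := Nat.factorial_mul_descFactorial (n := l*2) (k := M + l) (by omega)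
  rw [show l*2 - (M+l) = l - M by omega] at h3
  rw [eq_div_iff (by positivity), nsmul_eq_mul, mul_one, mul_comm 2 l, ← h3]
  push_cast; ring

open Polynomial in
/-- Orthogonality of associated Legendre functions (polynomial form). -/
lemma leg_orth_aux (l l' M : ℕ) (hl' : l' ≤ l) (hM : M ≤ l') :
    ∫ x in (-1:ℝ)..1, (1-x^2)^M * (derivative^[M] (legendreP l)).eval x *
      (derivative^[M] (legendreP l')).eval x =
      if l = l' then (2:ℝ) * (l+M).factorial / ((2*l+1) * (l-M).factorial) else (0:ℝ) := by
  set Q : ℝ[X] := (1 - X^2)^M * derivative^[M] (legendreP l') with hQ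
  have e1 : ∀ x : ℝ, (1-x^2)^M * (derivative^[M] (legendreP l)).eval x *
      (derivative^[M] (legendreP l')).eval x = (2^l * l.factorial : ℝ)⁻¹ *
      ((derivative^[M+l] ((X^2-1)^l)).eval x * Q.eval x) := by
    intro x
    rw [deriv_legendre l M, hQ]
    simp only [eval_mul, eval_C, eval_pow, eval_sub, eval_one, eval_X]
    ring
  simp_rw [e1]
  rw [intervalIntegral.integral_const_mul, poly_ibp]
  · have hdeg : Q.natDegree ≤ M * 2 + (l' - M) :=
      natDegree_mul_le.trans (add_le_add (natDegree_omx M) (natDegree_dleg l' M))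
    by_cases hll : l = l'
    · subst hll
      rw [if_pos rfl]
      have hc : derivative^[M+l] Q = C ((M+l).factorial * ((-1)^M * ((2^l * l.factorial : ℝ)⁻¹ * ((2*l).factorial / (l-M).factorial)))) := by
        have hco : Q.coeff (M+l) = (-1)^M * ((2^l * l.factorial : ℝ)⁻¹ * ((2*l).factorial / (l-M).factorial)) := by
          rw [show M + l = M*2 + (l - M) by omega, hQ,
            coeff_mul_add_eq_of_natDegree_le (natDegree_omx M) (natDegree_dleg l M), coeff_dleg l M hM,
            coeff_pow_of_natDegree_le (m := M) (n := 2) (by compute_degree)]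
          simp [coeff_one]
        ext n
        rw [coeff_iterate_derivative, coeff_C]
        split_ifs with hn
        · subst hn
          rw [zero_add, hco, Nat.descFactorial_self, nsmul_eq_mul]
        · rw [coeff_eq_zero_of_natDegree_lt (by omega), smul_zero]
      rw [hc]
      simp only [eval_C]
      rw [intervalIntegral.integral_mul_const]
      have e2 : ∀ x : ℝ, ((X^2-1 : ℝ[X])^l).eval x = (-1)^l * (1-x^2)^l := by
        intro x
        simp only [eval_pow, eval_sub, eval_one, eval_X]
        rw [← mul_pow]; congr 1; ring
      simp_rw [e2]
      rw [intervalIntegral.integral_const_mul, int_one_sub_sq, pow_add, Nat.factorial_succ (2*l), add_comm M l]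
      have s1 : ((-1:ℝ)^M)^2 = 1 := by rw [← pow_mul, mul_comm, pow_mul]; norm_num
      have s2 : ((-1:ℝ)^l)^2 = 1 := by rw [← pow_mul, mul_comm, pow_mul]; norm_num
      have f1 : ((2*l).factorial : ℝ) ≠ 0 := by positivity
      have f2 : ((l-M).factorial : ℝ) ≠ 0 := by positivity
      have f3 : ((l).factorial : ℝ) ≠ 0 := by positivity
      have f4 : (2*(l:ℝ)+1) ≠ 0 := by positivity
      push_cast
      generalize (-1:ℝ)^M = A at *
      generalize (-1:ℝ)^l = B at *
      rw [pow_succ, pow_mul', sq ((2:ℝ)^l)]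
      field_simp
      linear_combination B^2 * s1 + s2
    · rw [if_neg hll, iterate_derivative_eq_zero (by omega)]
      simp
  · have hv : ∀ x : ℝ, x^2 = 1 → ∀ i j, i + j + 1 = M + l →
        (derivative^[i] ((X^2-1 : ℝ[X])^l) * derivative^[j] Q).eval x = 0 := by
      intro x hx i j hij
      rw [eval_mul]
      by_cases hj : j < M
      · rw [vanish_deriv (1 - X^2) Q M j hj x (by simp [hx]) (Dvd.intro _ rfl), mul_zero]
      · rw [vanish_deriv (X^2 - 1) _ l i (by omega) x (by simp [hx]) dvd_rfl, zero_mul]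
    intro i j hij
    exact ⟨hv 1 (by norm_num) i j hij, hv (-1) (by norm_num) i j hij⟩

open Polynomial in
lemma leg_orth (l l' M : ℕ) (hM : M ≤ l) :
    ∫ x in (-1:ℝ)..1, (1-x^2)^M * (derivative^[M] (legendreP l)).eval x *
      (derivative^[M] (legendreP l')).eval x =
      if l = l' then (2:ℝ) * (l+M).factorial / ((2*l+1) * (l-M).factorial) else (0:ℝ) := by
  by_cases hM' : M ≤ l'
  · rcases le_total l' l with h | h
    · exact leg_orth_aux l l' M h hM'
    · have := leg_orth_aux l' l M h hM
      simp_rw [mul_right_comm _ (eval _ (derivative^[M] (legendreP l')))] at this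
      rw [this]
      by_cases e : l = l'
      · subst e; rfl
      · rw [if_neg e, if_neg (Ne.symm e)]
  · rw [dleg_zero l' M (by omega), if_neg (by omega)]
    simp

end

section

/-- the latitude part of the surface measure. -/
def muT : Measure ℝ :=
  ((volume : Measure ℝ).restrict (Set.Icc (-(π / 2)) (π / 2))).withDensity
    fun t => ENNReal.ofReal (Real.cos t)

/-- the longitude part of the surface measure. -/
def muP : Measure ℝ := (volume : Measure ℝ).restrict (Set.Ico (-π) π)

lemma muT_le : muT ≤ (volume : Measure ℝ).restrict (Set.Icc (-(π / 2)) (π / 2)) := by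
  conv_rhs => rw [← withDensity_one (μ := (volume : Measure ℝ).restrict (Set.Icc (-(π / 2)) (π / 2)))]
  refine withDensity_mono (Eventually.of_forall fun t => ?_)
  simpa using ENNReal.ofReal_le_one.mpr (Real.cos_le_one t)

instance muT_fin : IsFiniteMeasure muT := isFiniteMeasure_of_le _ muT_le

instance muP_fin : IsFiniteMeasure muP := by unfold muP; infer_instance

lemma sphereM_prod : sphereMeasure = muT.prod muP := by
  rw [muT, muP, prod_withDensity_left (by fun_prop), Measure.prod_restrict, sphereMeasure,
    Measure.volume_eq_prod]

instance sphere_fin : IsFiniteMeasure sphereMeasure := by rw [sphereM_prod]; infer_instance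

lemma muT_integrable (g : ℝ → ℂ) (hg : Continuous g) : Integrable g muT :=
  Integrable.mono_measure (hg.integrableOn_Icc) muT_le

lemma muP_integrable (g : ℝ → ℂ) (hg : Continuous g) : Integrable g muP :=
  (hg.integrableOn_Icc (a := -π) (b := π)).mono_set Set.Ico_subset_Icc_self

lemma muP_int (g : ℝ → ℂ) : ∫ x, g x ∂muP = ∫ x in (-π)..π, g x := by
  rw [muP, intervalIntegral.integral_of_le (by linarith [pi_pos]), integral_Ico_eq_integral_Ioc]

lemma muT_int (g : ℝ → ℝ) (hg : Continuous g) :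
    ∫ t, ((g (Real.sin t) : ℝ) : ℂ) ∂muT = ((∫ x in (-1:ℝ)..1, g x : ℝ) : ℂ) := by
  refine (integral_ofReal (𝕜 := ℂ) (f := fun t => g (Real.sin t))).trans ?_
  refine congrArg Complex.ofReal ?_
  rw [muT, integral_withDensity_eq_integral_toReal_smul (by fun_prop) (by simp),
    integral_Icc_eq_integral_Ioc, ← intervalIntegral.integral_of_le (by linarith [pi_pos])]
  have h := intervalIntegral.integral_comp_mul_deriv (a := -(π/2)) (b := π/2) (f := Real.sin)
    (f' := Real.cos) (g := g) (fun x _ => Real.hasDerivAt_sin x) (by fun_prop) hg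
  rw [Real.sin_neg, Real.sin_pi_div_two] at h
  rw [← h]
  refine intervalIntegral.integral_congr fun x hx => ?_
  rw [Set.uIcc_of_le (by linarith [pi_pos])] at hx
  simp only [Function.comp, smul_eq_mul]
  rw [ENNReal.toReal_ofReal (Real.cos_nonneg_of_mem_Icc hx), mul_comm]

lemma int_exp (k : ℤ) : ∫ x in (-π)..π, Complex.exp (Complex.I * k * x) =
    if k = 0 then 2 * (π : ℂ) else 0 := by
  split_ifs with hk
  · subst hk; simp; ring
  · have hc : Complex.I * (k : ℂ) ≠ 0 := by simp [hk]
    rw [integral_exp_mul_complex hc, sub_eq_zero.mpr, zero_div]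
    rw [Complex.exp_eq_exp_iff_exists_int]
    exact ⟨k, by push_cast; ring⟩

lemma assoc_cont (l M : ℕ) : Continuous (assocLegendre l M) := by
  unfold assocLegendre
  refine (continuous_const.mul ?_).mul (Polynomial.continuous _)
  exact Continuous.rpow_const (by fun_prop) (fun x => Or.inr (by positivity))

lemma Ylm_cont (l : ℕ) (m : ℤ) : Continuous fun p : ℝ × ℝ => Ylm l m p.1 p.2 := by
  unfold Ylm
  have := assoc_cont l m.natAbs
  fun_prop

lemma Ylm_zero (l : ℕ) (m : ℤ) (h : l < m.natAbs) (θ φ : ℝ) : Ylm l m θ φ = 0 := by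
  rw [Ylm, assocLegendre, dleg_zero l _ h]; simp

lemma Y_mul_conj (l l' : ℕ) (m m' : ℤ) (θ φ : ℝ) :
    Ylm l m θ φ * (starRingEnd ℂ) (Ylm l' m' θ φ) =
    (((alphaY l m * assocLegendre l m.natAbs (Real.sin θ)) *
      (alphaY l' m' * assocLegendre l' m'.natAbs (Real.sin θ)) : ℝ) : ℂ) *
      Complex.exp (Complex.I * ((m - m' : ℤ) : ℂ) * φ) := by
  rw [Ylm, Ylm, map_mul, Complex.conj_ofReal, ← Complex.exp_conj]
  simp only [map_mul, Complex.conj_I, Complex.conj_ofReal, map_intCast]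
  rw [mul_mul_mul_comm, ← Complex.exp_add, ← Complex.ofReal_mul]
  congr 2
  push_cast
  ring

lemma Y_orth (l l' : ℕ) (m m' : ℤ) (hm : m.natAbs ≤ l) :
    ∫ p : ℝ × ℝ, Ylm l m p.1 p.2 * (starRingEnd ℂ) (Ylm l' m' p.1 p.2) ∂sphereMeasure =
      if (l, m) = (l', m') then 1 else 0 := by
  simp_rw [Y_mul_conj]
  rw [sphereM_prod, integral_prod_mul (μ := muT) (ν := muP)
    (fun t => ((((alphaY l m * assocLegendre l m.natAbs (Real.sin t)) *
      (alphaY l' m' * assocLegendre l' m'.natAbs (Real.sin t)) : ℝ) : ℂ)))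
    (fun x => Complex.exp (Complex.I * ((m - m' : ℤ) : ℂ) * x)), muP_int, int_exp]
  by_cases hmm : m = m'
  · subst hmm
    rw [if_pos (sub_self m)]
    have c1 := assoc_cont l m.natAbs
    have c2 := assoc_cont l' m.natAbs
    have h := muT_int (fun x => (alphaY l m * assocLegendre l m.natAbs x) *
      (alphaY l' m * assocLegendre l' m.natAbs x)) (by fun_prop)
    rw [h]
    have h2 : ∫ x in (-1:ℝ)..1, (alphaY l m * assocLegendre l m.natAbs x) *
      (alphaY l' m * assocLegendre l' m.natAbs x) = ∫ x in (-1:ℝ)..1, (alphaY l m * alphaY l' m) *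
        ((1-x^2)^m.natAbs * (Polynomial.derivative^[m.natAbs] (legendreP l)).eval x *
      (Polynomial.derivative^[m.natAbs] (legendreP l')).eval x) := by
      refine intervalIntegral.integral_congr fun x hx => ?_
      rw [Set.uIcc_of_le (by norm_num)] at hx
      have hx1 : 0 ≤ 1 - x^2 := by nlinarith [hx.1, hx.2]
      simp only [assocLegendre]
      have e1 : (1-x^2)^((m.natAbs:ℝ)/2) * (1-x^2)^((m.natAbs:ℝ)/2) = (1-x^2)^m.natAbs := by
        rw [← Real.rpow_add_of_nonneg hx1 (by positivity) (by positivity), add_halves, Real.rpow_natCast]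
      have e2 : ((-1:ℝ)^m.natAbs) * (-1)^m.natAbs = 1 := by
        rw [← mul_pow]; norm_num
      rw [← e1]
      linear_combination (alphaY l m * alphaY l' m * ((1-x^2)^((m.natAbs:ℝ)/2) * (1-x^2)^((m.natAbs:ℝ)/2)) * (Polynomial.derivative^[m.natAbs] (legendreP l)).eval x *
      (Polynomial.derivative^[m.natAbs] (legendreP l')).eval x) * e2
    rw [h2, intervalIntegral.integral_const_mul, leg_orth l l' _ hm]
    by_cases hll : l = l'
    · subst hll
      rw [if_pos rfl, if_pos rfl, ← sq, alphaY_sq]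
      have f2 : ((l-m.natAbs).factorial : ℝ) ≠ 0 := by positivity
      have f3 : ((l+m.natAbs).factorial : ℝ) ≠ 0 := by positivity
      have f4 : (2*(l:ℝ)+1) ≠ 0 := by positivity
      have f5 := pi_ne_zero
      rw [show (2 * (π:ℂ)) = ((2 * π : ℝ) : ℂ) by push_cast; rfl, ← Complex.ofReal_mul, ← Complex.ofReal_one]
      congr 1
      field_simp
      try ring
    · rw [if_neg hll, if_neg (by simpa using hll)]; simp
  · rw [if_neg (sub_ne_zero.mpr hmm), mul_zero, if_neg]
    simp only [Prod.mk.injEq]; tauto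

end

section

lemma Y_meas (l : ℕ) (m : ℤ) : Measurable fun p : ℝ × ℝ => ‖Ylm l m p.1 p.2‖ₑ :=
  (Ylm_cont l m).measurable.enorm

lemma Y_integrable (l l' : ℕ) (m m' : ℤ) :
    Integrable (fun p : ℝ × ℝ => Ylm l m p.1 p.2 * (starRingEnd ℂ) (Ylm l' m' p.1 p.2))
      sphereMeasure := by
  simp_rw [Y_mul_conj]
  rw [sphereM_prod]
  have c1 := assoc_cont l m.natAbs
  have c2 := assoc_cont l' m'.natAbs
  have d1 : Continuous fun t : ℝ => ((((alphaY l m * assocLegendre l m.natAbs (Real.sin t)) *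
      (alphaY l' m' * assocLegendre l' m'.natAbs (Real.sin t)) : ℝ) : ℂ)) := by fun_prop
  have d2 : Continuous fun x : ℝ => Complex.exp (Complex.I * ((m - m' : ℤ) : ℂ) * x) := by fun_prop
  exact Integrable.mul_prod (f := fun t => ((((alphaY l m * assocLegendre l m.natAbs (Real.sin t)) *
      (alphaY l' m' * assocLegendre l' m'.natAbs (Real.sin t)) : ℝ) : ℂ)))
    (g := fun x : ℝ => Complex.exp (Complex.I * ((m - m' : ℤ) : ℂ) * x))
    (muT_integrable _ d1) (muP_integrable _ d2)

lemma Y_l2 (l : ℕ) (m : ℤ) :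
    ∫⁻ p : ℝ × ℝ, ‖Ylm l m p.1 p.2‖ₑ ^ 2 ∂sphereMeasure ≤ 1 := by
  by_cases hm : m.natAbs ≤ l
  · have h := Y_orth l l m m hm
    have hi := (Y_integrable l l m m).norm
    rw [if_pos rfl] at h
    have e : ∀ p : ℝ × ℝ, Ylm l m p.1 p.2 * (starRingEnd ℂ) (Ylm l m p.1 p.2) =
        ((‖Ylm l m p.1 p.2‖ ^ 2 : ℝ) : ℂ) := by
      intro p; rw [Complex.mul_conj, Complex.normSq_eq_norm_sq]
    simp_rw [e] at h hi
    replace h := (integral_ofReal (𝕜 := ℂ) (μ := sphereMeasure)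
      (f := fun p : ℝ × ℝ => ‖Ylm l m p.1 p.2‖ ^ 2)).symm.trans h
    have h' : ∫ p : ℝ × ℝ, ‖Ylm l m p.1 p.2‖ ^ 2 ∂sphereMeasure = 1 := Complex.ofReal_injective (h.trans Complex.ofReal_one.symm)
    simp only [Complex.norm_real, norm_pow, norm_norm] at hi
    have := ofReal_integral_eq_lintegral_ofReal hi (Eventually.of_forall fun p => by positivity)
    rw [h'] at this
    simp only [ENNReal.ofReal_pow (norm_nonneg _), ofReal_norm, ENNReal.ofReal_one] at this
    exact this.ge
  · simp [Ylm_zero l m (by omega)]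

lemma Y_prod_l1 (p q : ℕ × ℤ) :
    ∫⁻ x : ℝ × ℝ, ‖Ylm p.1 p.2 x.1 x.2‖ₑ * ‖Ylm q.1 q.2 x.1 x.2‖ₑ ∂sphereMeasure ≤ 1 := by
  have h := ENNReal.lintegral_mul_le_Lp_mul_Lq sphereMeasure
    (p := 2) (q := 2) (by constructor <;> norm_num) (f := fun x => ‖Ylm p.1 p.2 x.1 x.2‖ₑ)
    (g := fun x => ‖Ylm q.1 q.2 x.1 x.2‖ₑ)
    (Y_meas _ _).aemeasurable (Y_meas _ _).aemeasurable
  refine h.trans ?_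
  have k : ∀ p : ℕ × ℤ, (∫⁻ x : ℝ × ℝ, ‖Ylm p.1 p.2 x.1 x.2‖ₑ ^ (2:ℝ) ∂sphereMeasure) ^ (1/(2:ℝ)) ≤ 1 := by
    intro p
    refine ENNReal.rpow_le_one ?_ (by norm_num)
    have := Y_l2 p.1 p.2
    simpa only [ENNReal.rpow_ofNat] using this
  exact mul_le_one' (k p) (k q)

/-- spherical harmonic series. -/
def Yser (d : ℕ × ℤ → ℂ) (θ φ : ℝ) : ℂ := ∑' p : ℕ × ℤ, d p * Ylm p.1 p.2 θ φ

lemma Yser_memLp (d : ℕ × ℤ → ℂ) (hd : ∑' p, ‖d p‖ₑ ≠ ⊤) :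
    MemLp (fun x : ℝ × ℝ => Yser d x.1 x.2) 2 sphereMeasure := by
  refine ⟨?_, ?_⟩
  · unfold Yser
    refine AEStronglyMeasurable.tsum fun p => ?_
    exact (continuous_const.mul (Ylm_cont p.1 p.2)).aestronglyMeasurable
  · rw [eLpNorm_lt_top_iff_lintegral_rpow_enorm_lt_top (by norm_num) (by norm_num)]
    simp only [ENNReal.toReal_ofNat, ENNReal.rpow_ofNat]
    calc ∫⁻ x : ℝ × ℝ, ‖Yser d x.1 x.2‖ₑ ^ 2 ∂sphereMeasure
        ≤ ∫⁻ x : ℝ × ℝ, ∑' p, ∑' q, (‖d p‖ₑ * ‖d q‖ₑ) *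
          (‖Ylm p.1 p.2 x.1 x.2‖ₑ * ‖Ylm q.1 q.2 x.1 x.2‖ₑ) ∂sphereMeasure := by
          refine lintegral_mono fun x => ?_
          have h : ‖Yser d x.1 x.2‖ₑ ≤ ∑' p : ℕ × ℤ, ‖d p‖ₑ * ‖Ylm p.1 p.2 x.1 x.2‖ₑ := by
            unfold Yser
            refine enorm_tsum_le_tsum_enorm.trans (le_of_eq ?_)
            simp_rw [enorm_mul]
          refine (pow_le_pow_left' h 2).trans (le_of_eq ?_)
          rw [sq, ← ENNReal.tsum_mul_right]
          congr 1; ext p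
          rw [← ENNReal.tsum_mul_left]
          congr 1; ext q
          ring
      _ = ∑' p : ℕ × ℤ, ∑' q : ℕ × ℤ, (‖d p‖ₑ * ‖d q‖ₑ) * ∫⁻ x : ℝ × ℝ,
          (‖Ylm p.1 p.2 x.1 x.2‖ₑ * ‖Ylm q.1 q.2 x.1 x.2‖ₑ) ∂sphereMeasure := by
          have hm : ∀ p q : ℕ × ℤ, Measurable fun x : ℝ × ℝ => (‖Ylm p.1 p.2 x.1 x.2‖ₑ * ‖Ylm q.1 q.2 x.1 x.2‖ₑ) :=
            fun p q => (Y_meas _ _).mul (Y_meas _ _)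
          rw [lintegral_tsum fun p => (Measurable.tsum fun q => (hm p q).const_mul _).aemeasurable]
          congr 1; ext p
          rw [lintegral_tsum fun q => ((hm p q).const_mul _).aemeasurable]
          congr 1; ext q
          rw [lintegral_const_mul _ (hm p q)]
      _ ≤ ∑' p : ℕ × ℤ, ∑' q : ℕ × ℤ, (‖d p‖ₑ * ‖d q‖ₑ) * 1 :=
          ENNReal.tsum_le_tsum fun p => ENNReal.tsum_le_tsum fun q =>
            mul_le_mul' le_rfl (Y_prod_l1 p q)
      _ = (∑' p, ‖d p‖ₑ) * (∑' p, ‖d p‖ₑ) := by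
          simp_rw [mul_one, ENNReal.tsum_mul_left, ENNReal.tsum_mul_right]
      _ < ⊤ := ENNReal.mul_lt_top hd.lt_top hd.lt_top

lemma Yser_coeff (d : ℕ × ℤ → ℂ) (hd : ∑' p, ‖d p‖ₑ ≠ ⊤)
    (h0 : ∀ l m, l < m.natAbs → d (l, m) = 0) (l : ℕ) (m : ℤ) :
    flCoeff (Yser d) l m = d (l, m) := by
  unfold flCoeff Yser
  simp_rw [← tsum_mul_right]
  rw [integral_tsum]
  · have : ∀ p : ℕ × ℤ, ∫ x : ℝ × ℝ, d p * Ylm p.1 p.2 x.1 x.2 * (starRingEnd ℂ) (Ylm l m x.1 x.2) ∂sphereMeasure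
        = if p = (l, m) then d p else 0 := by
      intro p
      simp_rw [mul_assoc]
      rw [integral_const_mul]
      by_cases hp : p.2.natAbs ≤ p.1
      · rw [Y_orth _ _ _ _ hp, mul_ite, mul_one, mul_zero]
      · have : d p = 0 := h0 p.1 p.2 (by omega)
        simp [this]
    simp_rw [this]
    rw [tsum_ite_eq]
  · intro p
    have h1 := Ylm_cont p.1 p.2
    have h2 := Ylm_cont l m
    have h3 : Continuous fun x : ℝ × ℝ => (starRingEnd ℂ) (Ylm l m x.1 x.2) :=
      Complex.continuous_conj.comp h2
    exact ((continuous_const.mul h1).mul h3).aestronglyMeasurable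
  · refine ne_top_of_le_ne_top hd (ENNReal.tsum_le_tsum fun p => ?_)
    simp_rw [enorm_mul, mul_assoc, RCLike.enorm_conj]
    have hm : Measurable fun x : ℝ × ℝ => ‖Ylm p.1 p.2 x.1 x.2‖ₑ * ‖Ylm l m x.1 x.2‖ₑ :=
      (Y_meas _ _).mul (Y_meas _ _)
    rw [lintegral_const_mul _ hm]
    exact (mul_le_mul' le_rfl (Y_prod_l1 p (l, m))).trans_eq (mul_one _)

end

section

lemma Yc_cont (l : ℕ) (m : ℤ) : Continuous fun p : ℝ × ℝ => (starRingEnd ℂ) (Ylm l m p.1 p.2) :=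
  Complex.continuous_conj.comp (Ylm_cont l m)

lemma Yc_memLp (l : ℕ) (m : ℤ) :
    MemLp (fun p : ℝ × ℝ => (starRingEnd ℂ) (Ylm l m p.1 p.2)) 2 sphereMeasure := by
  refine ⟨(Yc_cont l m).aestronglyMeasurable, ?_⟩
  rw [eLpNorm_lt_top_iff_lintegral_rpow_enorm_lt_top (by norm_num) (by norm_num)]
  simp only [ENNReal.toReal_ofNat, ENNReal.rpow_ofNat, RCLike.enorm_conj]
  exact (Y_l2 l m).trans_lt ENNReal.one_lt_top

lemma Yc_deriv (l : ℕ) (m : ℤ) (θ φ : ℝ) :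
    HasDerivAt (fun x : ℝ => (starRingEnd ℂ) (Ylm l m θ x))
      (-(Complex.I * m) * (starRingEnd ℂ) (Ylm l m θ φ)) φ := by
  have e : ∀ x : ℝ, (starRingEnd ℂ) (Ylm l m θ x) =
    ((alphaY l m * assocLegendre l m.natAbs (Real.sin θ) : ℝ) : ℂ) *
    Complex.exp (-(Complex.I * m) * x) := by
    intro x
    rw [Ylm, map_mul, Complex.conj_ofReal, ← Complex.exp_conj]
    simp only [map_mul, Complex.conj_I, Complex.conj_ofReal, map_intCast]
    congr 2; ring
  simp_rw [e]
  have h1 : HasDerivAt (fun x : ℝ => -(Complex.I * m) * (x : ℂ)) (-(Complex.I * m)) φ := by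
    simpa using (Complex.ofRealCLM.hasDerivAt (x := φ)).const_mul (-(Complex.I * m))
  refine ((h1.cexp).const_mul _).congr_deriv ?_
  ring

lemma Yc_per (l : ℕ) (m : ℤ) (θ : ℝ) :
    Ylm l m θ π = Ylm l m θ (-π) := by
  rw [Ylm, Ylm]
  congr 1
  rw [Complex.exp_eq_exp_iff_exists_int]
  exact ⟨m, by push_cast; ring⟩

lemma ibp_abs (u v : ℝ → ℂ) (c : ℂ) (hu : Differentiable ℝ u) (hv : ∀ x, HasDerivAt v (-c * v x) x)
    (e1 : u π = u (-π)) (e2 : v π = v (-π))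
    (hi : Integrable (fun x => deriv u x * v x) muP) :
    ∫ x, deriv u x * v x ∂muP = ∫ x, c * (u x * v x) ∂muP := by
  have hi1 : IntervalIntegrable (fun x => deriv u x * v x) volume (-π) π := by
    rw [intervalIntegrable_iff_integrableOn_Ioc_of_le (by linarith [pi_pos]),
      ← integrableOn_Icc_iff_integrableOn_Ioc, integrableOn_Icc_iff_integrableOn_Ico]
    exact hi
  have hvc : Continuous v := continuous_iff_continuousAt.mpr fun x => (hv x).continuousAt
  have hc2 : Continuous fun x => u x * (-c * v x) :=
    hu.continuous.mul (continuous_const.mul hvc)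
  have hi2 : IntervalIntegrable (fun x => u x * (-c * v x)) volume (-π) π :=
    hc2.intervalIntegrable (-π) π
  have hder : ∀ x ∈ Set.uIcc (-π) π, HasDerivAt (fun x => u x * v x)
      (deriv u x * v x + u x * (-c * v x)) x :=
    fun x _ => HasDerivAt.mul (hu x).hasDerivAt (hv x)
  have hi3 : IntervalIntegrable (fun x => deriv u x * v x + u x * (-c * v x)) volume (-π) π :=
    hi1.add hi2
  have key := intervalIntegral.integral_eq_sub_of_hasDerivAt hder hi3
  rw [intervalIntegral.integral_add hi1 hi2, e1, e2, sub_self] at key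
  rw [muP_int, muP_int]
  have e3 : ∫ x in (-π)..π, u x * (-c * v x) = - ∫ x in (-π)..π, c * (u x * v x) := by
    rw [← intervalIntegral.integral_neg]
    refine intervalIntegral.integral_congr fun x _ => ?_
    ring
  rw [e3] at key
  exact add_neg_eq_zero.mp key

lemma flCoeff_deriv (f : ℝ → ℝ → ℂ) (hf : ∀ θ : ℝ, Differentiable ℝ (f θ))
    (hp : ∀ θ φ : ℝ, f θ (φ + 2 * Real.pi) = f θ φ)
    (h1 : MemLp (fun p : ℝ × ℝ => f p.1 p.2) 2 sphereMeasure)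
    (h2 : MemLp (fun p : ℝ × ℝ => deriv (f p.1) p.2) 2 sphereMeasure) (l : ℕ) (m : ℤ) :
    flCoeff (fun θ φ => deriv (f θ) φ) l m = Complex.I * m * flCoeff f l m := by
  have i1 : Integrable (fun p : ℝ × ℝ => f p.1 p.2 * (starRingEnd ℂ) (Ylm l m p.1 p.2))
    sphereMeasure := h1.integrable_mul (Yc_memLp l m)
  have i2 : Integrable (fun p : ℝ × ℝ => deriv (f p.1) p.2 * (starRingEnd ℂ) (Ylm l m p.1 p.2))
    sphereMeasure := h2.integrable_mul (Yc_memLp l m)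
  unfold flCoeff
  rw [← integral_const_mul]
  have i3 := i1.const_mul (Complex.I * m)
  rw [sphereM_prod] at i2 i3 ⊢
  rw [integral_prod _ i2, integral_prod _ i3]
  refine integral_congr_ae ?_
  filter_upwards [i2.prod_right_ae] with θ hθ
  have hper : f θ π = f θ (-π) := by
    have := hp θ (-π); rw [← this]; congr 1; ring
  exact ibp_abs (f θ) (fun φ => (starRingEnd ℂ) (Ylm l m θ φ)) (Complex.I * m) (hf θ)
    (Yc_deriv l m θ) hper (congrArg (starRingEnd ℂ) (Yc_per l m θ)) hθ

lemma flCoeff_deriv_norm (f : ℝ → ℝ → ℂ) (hf : ∀ θ : ℝ, Differentiable ℝ (f θ))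
    (hp : ∀ θ φ : ℝ, f θ (φ + 2 * Real.pi) = f θ φ)
    (h1 : MemLp (fun p : ℝ × ℝ => f p.1 p.2) 2 sphereMeasure)
    (h2 : MemLp (fun p : ℝ × ℝ => deriv (f p.1) p.2) 2 sphereMeasure) (l : ℕ) (m : ℤ) :
    ‖flCoeff (fun θ φ => deriv (f θ) φ) l m‖ ^ 2 = (m.natAbs : ℝ) ^ 2 * ‖flCoeff f l m‖ ^ 2 := by
  rw [flCoeff_deriv f hf hp h1 h2, norm_mul, norm_mul, Complex.norm_I, one_mul, Complex.norm_intCast,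
    mul_pow]
  congr 2
  rw [Nat.cast_natAbs]; push_cast; rfl

end

section

lemma tsum_ofReal_sqrt {ι : Type*} (F : ι → ℝ) (h0 : ∀ i, 0 ≤ F i) (hs : Summable F) :
    ∑' i, ENNReal.ofReal (F i) = ENNReal.ofReal (Real.sqrt (∑' i, F i) ^ 2) := by
  rw [Real.sq_sqrt (tsum_nonneg h0), ENNReal.ofReal_tsum_of_nonneg h0 hs]

lemma summable_of_tsum_le {ι : Type*} (F : ι → ℝ) (h0 : ∀ i, 0 ≤ F i) (B : ℝ) (hB : 0 ≤ B)
    (h : ∑' i, ENNReal.ofReal (F i) ≤ ENNReal.ofReal B) : Summable F ∧ ∑' i, F i ≤ B := by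
  have hne : ∑' i, ENNReal.ofReal (F i) ≠ ⊤ := ne_top_of_le_ne_top ENNReal.ofReal_ne_top h
  have hs : Summable F := by
    have := ENNReal.summable_toReal hne
    simpa [ENNReal.toReal_ofReal (h0 _)] using this
  refine ⟨hs, ?_⟩
  rw [← ENNReal.ofReal_tsum_of_nonneg h0 hs] at h
  exact (ENNReal.ofReal_le_ofReal_iff hB).mp h

lemma main_aux (s : ℝ) (hs : 0 ≤ s) :
    ∃ C > 0, ∀ (f : ℝ → ℝ → ℂ) (h : ℝ → ℂ),
      (∀ θ : ℝ, Differentiable ℝ (f θ)) →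
      (∀ θ φ : ℝ, f θ (φ + 2 * Real.pi) = f θ φ) →
      MemHs s f →
      MemHs (max (s - 1 / 2) 0) (fun θ φ => deriv (f θ) φ) →
      MemHsE (s + 3 / 4) h →
      MemHs (s + 1) (vTraceS f h) ∧
      HsNorm (s + 1) (vTraceS f h) ≤
        C * (HsNorm s f + HsNorm (max (s - 1 / 2) 0) (fun θ φ => deriv (f θ) φ) +
          HsNormE (s + 3 / 4) h) := by
  obtain ⟨K, hK, h1⟩ := seq_est1 s hs
  obtain ⟨K2, hK2, h2⟩ := seq_est2 s hs
  refine ⟨Real.sqrt K.toReal + 1, by positivity, fun f h hd hp hf hf' hh => ?_⟩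
  set X := HsNorm s f with hX
  set Y := HsNorm (max (s - 1 / 2) 0) (fun θ φ => deriv (f θ) φ) with hY
  set Z := HsNormE (s + 3 / 4) h with hZ
  have X0 : 0 ≤ X := Real.sqrt_nonneg _
  have Y0 : 0 ≤ Y := Real.sqrt_nonneg _
  have Z0 : 0 ≤ Z := Real.sqrt_nonneg _
  have eZ : ∑' m : ℤ, Hm s h m = ENNReal.ofReal (Z ^ 2) :=
    tsum_ofReal_sqrt _ (fun m => by positivity) hh.2
  have eW : ∑' p : ℕ × ℤ, ENNReal.ofReal (Wt s p.2.natAbs ((p.1 : ℝ) + 1) * ‖flCoeff f p.1 p.2‖ ^ 2)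
      = ENNReal.ofReal (X ^ 2) + ENNReal.ofReal (Y ^ 2) := by
    rw [hX, hY, HsNorm, HsNorm, ← tsum_ofReal_sqrt _ (fun m => by positivity) hf.2,
      ← tsum_ofReal_sqrt _ (fun m => by positivity) hf'.2, ← ENNReal.tsum_add]
    congr 1; ext p
    rw [← ENNReal.ofReal_add (by positivity) (by positivity), flCoeff_deriv_norm f hd hp hf.1 hf'.1, Wt]
    congr 1
    ring
  have hsum : ∑' m : ℤ, Hm s h m +
      ∑' p : ℕ × ℤ, ENNReal.ofReal (Wt s p.2.natAbs ((p.1 : ℝ) + 1) * ‖flCoeff f p.1 p.2‖ ^ 2) =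
      ENNReal.ofReal (Z ^ 2 + (X ^ 2 + Y ^ 2)) := by
    rw [eZ, eW, ← ENNReal.ofReal_add (by positivity) (by positivity),
      ← ENNReal.ofReal_add (by positivity) (by positivity)]
  have hdsum : ∑' p : ℕ × ℤ, ‖dCoef f h p‖ₑ ≠ ⊤ := by
    refine ne_top_of_le_ne_top ?_ (h2 f h)
    rw [hsum]
    exact ENNReal.mul_ne_top hK2 (ENNReal.add_ne_top.mpr ⟨zsum32Z, ENNReal.ofReal_ne_top⟩)
  have hv : vTraceS f h = Yser (dCoef f h) := rfl
  have hco : ∀ p : ℕ × ℤ, flCoeff (vTraceS f h) p.1 p.2 = dCoef f h p := fun p => by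
    rw [hv, Yser_coeff _ hdsum (dCoef_zero f h)]
  have hmain := h1 f h
  rw [hsum, ← ENNReal.ofReal_toReal hK, ← ENNReal.ofReal_mul ENNReal.toReal_nonneg] at hmain
  obtain ⟨hS, hle⟩ := summable_of_tsum_le _ (fun p => by positivity) _ (by positivity) hmain
  refine ⟨⟨?_, ?_⟩, ?_⟩
  · rw [hv]; exact Yser_memLp _ hdsum
  · simpa only [hco] using hS
  · rw [HsNorm]
    simp only [hco]
    have hk0 : 0 ≤ Real.sqrt K.toReal := Real.sqrt_nonneg _
    calc _ ≤ Real.sqrt (K.toReal * (Z ^ 2 + (X ^ 2 + Y ^ 2))) := Real.sqrt_le_sqrt hle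
      _ = Real.sqrt K.toReal * Real.sqrt (Z ^ 2 + (X ^ 2 + Y ^ 2)) :=
        Real.sqrt_mul ENNReal.toReal_nonneg _
      _ ≤ Real.sqrt K.toReal * (X + Y + Z) := by
        refine mul_le_mul_of_nonneg_left (Real.sqrt_le_iff.mpr ⟨by positivity, ?_⟩) hk0
        nlinarith [mul_nonneg X0 Y0, mul_nonneg X0 Z0, mul_nonneg Y0 Z0]
      _ ≤ (Real.sqrt K.toReal + 1) * (X + Y + Z) :=
        mul_le_mul_of_nonneg_right (by linarith) (by positivity)

end

/-- Lemma 3.2: fractional Sobolev estimate for the series solution.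
For `s ≥ 0` there is `C > 0` such that if `f ∈ H^s(𝕊)` with `f_φ ∈ H^{(s-1/2)₊}(𝕊)`
and `h ∈ H^{s+3/4}(ℰ)`, then the trace of the series solution
`v = Σ (b_l^m + c_l^m) r^{-l-1} Y_l^m` belongs to `H^{s+1}(𝕊)` and
`‖v‖_{H^{s+1}} ≤ C (‖f‖_{H^s} + ‖f_φ‖_{H^{(s-1/2)₊}} + ‖h‖_{H^{s+3/4}(ℰ)})`. -/
theorem series_solution_sobolev_estimate (s : ℝ) (hs : 0 ≤ s) :
    ∃ C > 0, ∀ (f : ℝ → ℝ → ℂ) (h : ℝ → ℂ),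
      (∀ θ : ℝ, Differentiable ℝ (f θ)) →
      (∀ θ φ : ℝ, f θ (φ + 2 * Real.pi) = f θ φ) →
      MemHs s f →
      MemHs (max (s - 1 / 2) 0) (fun θ φ => deriv (f θ) φ) →
      MemHsE (s + 3 / 4) h →
      MemHs (s + 1) (vTraceS f h) ∧
      HsNorm (s + 1) (vTraceS f h) ≤
        C * (HsNorm s f + HsNorm (max (s - 1 / 2) 0) (fun θ φ => deriv (f θ) φ) +
          HsNormE (s + 3 / 4) h) := by
  exact main_aux s hs

end
end

section
/- (Uniqueness for the linearized oblique derivative problem.) Let v₁, v₂ ∈ C²(Ω) ∩ C¹(cl Ω) both satisfy: Δv = 0 in Ω, ∇d·∇v = f/2 on 𝕊 (equivalently −2 sin θ · v_r + cos θ · v_θ = f/2 on 𝕊), v → 0 as |x| → ∞, and v = h on the equator ℰ, for the same data f and h. Then v₁ = v₂ on cl Ω. -/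
noncomputable section

open MeasureTheory Real Filter

/-! ### Helper lemmas -/

/-- Second-order necessary condition at a local maximum. -/
theorem aux_second_test (f f' : ℝ → ℝ) (c : ℝ)
    (h1 : ∀ᶠ t in nhds (0 : ℝ), HasDerivAt f (f' t) t) (h2 : HasDerivAt f' c 0)
    (hmax : IsLocalMax f 0) : c ≤ 0 := by
  by_contra hc
  push Not at hc
  have e1 : deriv f =ᶠ[nhds 0] f' := h1.mono fun t ht => ht.deriv
  have e2 : deriv (deriv f) 0 = c := by rw [e1.deriv_eq]; exact h2.deriv
  have hmin : IsLocalMin f 0 :=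
    isLocalMin_of_deriv_deriv_pos (by rw [e2]; exact hc) hmax.deriv_eq_zero
      h1.self_of_nhds.continuousAt
  have e3 : f =ᶠ[nhds 0] fun _ => f 0 := by
    filter_upwards [hmax, hmin] with t a b using le_antisymm a b
  have e4 : deriv f =ᶠ[nhds 0] fun _ => 0 := by
    have := e3.deriv
    simpa using this
  have : deriv (deriv f) 0 = 0 := by rw [e4.deriv_eq]; simp
  linarith

theorem aux_isOpen_ext : IsOpen extDomain := isOpen_lt continuous_const continuous_norm

theorem aux_isClosed_ext : IsClosed closedExt := isClosed_le continuous_const continuous_norm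

theorem aux_line (x e : EuclideanSpace ℝ (Fin 3)) (t : ℝ) :
    HasDerivAt (fun t : ℝ => x + t • e) e t := by
  simpa using ((hasDerivAt_id t).smul_const e).const_add x

theorem aux_fderiv_diff (v : EuclideanSpace ℝ (Fin 3) → ℝ) (hv : ContDiffOn ℝ 2 v extDomain)
    (x e : EuclideanSpace ℝ (Fin 3)) (hx : x ∈ extDomain) :
    DifferentiableAt ℝ (fun y => fderiv ℝ v y e) x := by
  have h : ContDiffAt ℝ 2 v x := hv.contDiffAt (aux_isOpen_ext.mem_nhds hx)
  have h1 : ContDiffAt ℝ 1 (fderiv ℝ v) x := h.fderiv_right (by norm_num)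
  exact (h1.differentiableAt (by norm_num)).clm_apply (differentiableAt_const e)

theorem aux_line_v (v : EuclideanSpace ℝ (Fin 3) → ℝ) (hv : ContDiffOn ℝ 2 v extDomain)
    (x e : EuclideanSpace ℝ (Fin 3)) (hx : x ∈ extDomain) :
    (∀ᶠ t in nhds (0 : ℝ), HasDerivAt (fun t : ℝ => v (x + t • e)) (fderiv ℝ v (x + t • e) e) t) ∧
    HasDerivAt (fun t : ℝ => fderiv ℝ v (x + t • e) e)
      (fderiv ℝ (fun y => fderiv ℝ v y e) x e) 0 := by
  constructor
  · have hc : ContinuousAt (fun t : ℝ => x + t • e) 0 := (aux_line x e 0).continuousAt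
    have : ∀ᶠ t in nhds (0 : ℝ), x + t • e ∈ extDomain :=
      hc.eventually (aux_isOpen_ext.mem_nhds (by simpa using hx))
    filter_upwards [this] with t ht
    have hd : DifferentiableAt ℝ v (x + t • e) :=
      (hv.contDiffAt (aux_isOpen_ext.mem_nhds ht)).differentiableAt (by norm_num)
    exact hd.hasFDerivAt.comp_hasDerivAt t (aux_line x e t)
  · have hd := aux_fderiv_diff v hv x e hx
    have h := hd.hasFDerivAt
    have hx0 : x = x + (0 : ℝ) • e := by simp
    have h' : HasFDerivAt (fun y => fderiv ℝ v y e) (fderiv ℝ (fun y => fderiv ℝ v y e) x)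
      (x + (0 : ℝ) • e) := by rw [← hx0]; exact h
    exact h'.comp_hasDerivAt (0 : ℝ) (aux_line x e 0)

/-- The barrier `M |x|^{-1/2}`. -/
def auxB (M : ℝ) (x : EuclideanSpace ℝ (Fin 3)) : ℝ := M * (‖x‖ ^ 2) ^ (-(1 / 4) : ℝ)

theorem aux_norm_line (x : EuclideanSpace ℝ (Fin 3)) (i : Fin 3) (t : ℝ) :
    ‖x + t • EuclideanSpace.single i (1 : ℝ)‖ ^ 2 = ‖x‖ ^ 2 + 2 * x i * t + t ^ 2 := by
  rw [norm_add_sq_real, inner_smul_right, norm_smul]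
  simp [EuclideanSpace.inner_single_right]
  ring

theorem aux_line_b (M : ℝ) (x : EuclideanSpace ℝ (Fin 3)) (i : Fin 3) (hx : x ∈ extDomain) :
    ∃ b' : ℝ → ℝ,
    (∀ᶠ t in nhds (0 : ℝ), HasDerivAt
      (fun t : ℝ => auxB M (x + t • EuclideanSpace.single i (1 : ℝ))) (b' t) t) ∧
    HasDerivAt b' (M * (‖x‖ ^ 2) ^ (-(9 / 4) : ℝ) * (5 / 4 * x i ^ 2 - 1 / 2 * ‖x‖ ^ 2)) 0 := by
  have hs : 0 < ‖x‖ ^ 2 := by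
    have : 1 < ‖x‖ := hx
    positivity
  set s := ‖x‖ ^ 2 with hsdef
  set a := x i
  have hq : ∀ t : ℝ, HasDerivAt (fun t : ℝ => s + 2 * a * t + t ^ 2) (2 * a + 2 * t) t := by
    intro t
    have := (((hasDerivAt_id t).const_mul (2 * a)).const_add s).add ((hasDerivAt_id t).pow 2)
    exact this.congr_deriv (by simp)
  refine ⟨fun t => M * ((2 * a + 2 * t) * (-(1 / 4)) * (s + 2 * a * t + t ^ 2) ^ (-(5 / 4) : ℝ)),
    ?_, ?_⟩
  · have hpos : ∀ᶠ t in nhds (0 : ℝ), 0 < s + 2 * a * t + t ^ 2 := by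
      apply (hq 0).continuousAt.eventually
      apply lt_mem_nhds
      simpa using hs
    filter_upwards [hpos] with t ht
    have := ((hq t).rpow_const (p := (-(1 / 4) : ℝ)) (Or.inl ht.ne')).const_mul M
    unfold auxB
    simp only [aux_norm_line]
    refine this.congr_deriv ?_
    have e : (-(1 / 4) : ℝ) - 1 = -(5 / 4) := by norm_num
    rw [e]
  · have h0 : (s + 2 * a * 0 + (0 : ℝ) ^ 2) ≠ 0 := by simpa using hs.ne'
    have h1 := (hq 0).rpow_const (p := (-(5 / 4) : ℝ)) (Or.inl h0)
    have h2 : HasDerivAt (fun t : ℝ => (2 * a + 2 * t) * (-(1 / 4))) (2 * (-(1 / 4))) 0 := by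
      simpa using (((hasDerivAt_id (0 : ℝ)).const_mul 2).const_add (2 * a)).mul_const (-(1 / 4))
    have h3 := (h2.mul h1).const_mul M
    refine h3.congr_deriv ?_
    have e1 : (-(5 / 4) : ℝ) - 1 = -(9 / 4) := by norm_num
    have e2 : (s + 2 * a * 0 + (0 : ℝ) ^ 2) = s := by ring
    have e3 : s ^ (-(5 / 4) : ℝ) = s ^ (-(9 / 4) : ℝ) * s := by
      rw [← Real.rpow_add_one hs.ne']; norm_num
    rw [e1, e2, e3]
    ring

theorem aux_compare (v : EuclideanSpace ℝ (Fin 3) → ℝ) (hv : ContDiffOn ℝ 2 v extDomain)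
    (hc : ContinuousOn v closedExt) (hl : ∀ x ∈ extDomain, lap v x = 0)
    (ht : Tendsto v (Bornology.cobounded _) (nhds 0)) (M : ℝ) (hM : 0 < M)
    (hb : ∀ x, ‖x‖ = 1 → v x ≤ M) : ∀ x ∈ closedExt, v x ≤ auxB M x := by
  by_contra hcon
  push Not at hcon
  obtain ⟨x1, hx1, hlt⟩ := hcon
  have hbpos : ∀ x, 0 ≤ auxB M x := fun x => by unfold auxB; positivity
  have hcb : ContinuousOn (auxB M) closedExt := by
    unfold auxB
    apply ContinuousOn.mul continuousOn_const
    apply ContinuousOn.rpow_const (by fun_prop)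
    intro x hx
    left
    have : 1 ≤ ‖x‖ := hx
    positivity
  obtain ⟨x0, hx0, hmax⟩ := (hc.sub hcb).exists_isMaxOn' aux_isClosed_ext hx1 (by
    have hev : ∀ᶠ x in Bornology.cobounded (EuclideanSpace ℝ (Fin 3)),
        v x < v x1 - auxB M x1 := ht.eventually_lt_const (by linarith)
    rw [Metric.cobounded_eq_cocompact] at hev
    refine (hev.filter_mono inf_le_left).mono fun x hx => ?_
    have := hbpos x
    show v x - auxB M x ≤ v x1 - auxB M x1
    linarith)
  have hpos : 0 < v x0 - auxB M x0 := lt_of_lt_of_le (sub_pos.2 hlt) (hmax hx1)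
  have hx0' : x0 ∈ extDomain := by
    rcases lt_or_eq_of_le (show 1 ≤ ‖x0‖ from hx0) with h | h
    · exact h
    · exfalso
      have h1 := hb x0 h.symm
      have h2 : auxB M x0 = M := by unfold auxB; rw [← h]; simp
      linarith
  have key : ∀ i : Fin 3, fderiv ℝ (fun y => fderiv ℝ v y (EuclideanSpace.single i 1)) x0
      (EuclideanSpace.single i 1) -
      M * (‖x0‖ ^ 2) ^ (-(9 / 4) : ℝ) * (5 / 4 * x0 i ^ 2 - 1 / 2 * ‖x0‖ ^ 2) ≤ 0 := by
    intro i
    obtain ⟨a1, a2⟩ := aux_line_v v hv x0 (EuclideanSpace.single i 1) hx0'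
    obtain ⟨b', b1, b2⟩ := aux_line_b M x0 i hx0'
    refine aux_second_test _ _ _ (by filter_upwards [a1, b1] with t p q using p.sub q)
      (a2.sub b2) ?_
    have hcl : ContinuousAt (fun t : ℝ => x0 + t • EuclideanSpace.single i (1 : ℝ)) 0 :=
      (aux_line x0 _ 0).continuousAt
    have : ∀ᶠ t in nhds (0 : ℝ), x0 + t • EuclideanSpace.single i (1 : ℝ) ∈ extDomain :=
      hcl.eventually (aux_isOpen_ext.mem_nhds (by simpa using hx0'))
    filter_upwards [this] with t ht
    have := hmax (show x0 + t • EuclideanSpace.single i (1 : ℝ) ∈ closedExt from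
      le_of_lt (show 1 < ‖x0 + t • EuclideanSpace.single i (1 : ℝ)‖ from ht))
    simpa using this
  have hsum := Finset.sum_nonpos (s := Finset.univ) fun i _ => key i
  have hl0 := hl x0 hx0'
  unfold lap at hl0
  rw [Finset.sum_sub_distrib, hl0, ← Finset.mul_sum] at hsum
  have hn : ‖x0‖ ^ 2 = x0 0 ^ 2 + x0 1 ^ 2 + x0 2 ^ 2 := by
    rw [EuclideanSpace.norm_sq_eq]; simp [Fin.sum_univ_three]
  have h3 : ∑ i : Fin 3, (5 / 4 * x0 i ^ 2 - 1 / 2 * ‖x0‖ ^ 2) = -(1 / 4) * ‖x0‖ ^ 2 := by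
    rw [Fin.sum_univ_three]; linarith
  rw [h3] at hsum
  have hs : 0 < ‖x0‖ ^ 2 := by
    have : 1 < ‖x0‖ := hx0'
    positivity
  have : 0 < M * (‖x0‖ ^ 2) ^ (-(9 / 4) : ℝ) * (1 / 4 * ‖x0‖ ^ 2) := by positivity
  linarith

theorem aux_norm_sph (θ φ : ℝ) : ‖sphCoord θ φ‖ = 1 := by
  have : ‖sphCoord θ φ‖ ^ 2 = 1 := by
    rw [EuclideanSpace.norm_sq_eq]
    simp [Fin.sum_univ_three, sphCoord]
    nlinarith [Real.sin_sq_add_cos_sq θ, Real.sin_sq_add_cos_sq φ]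
  nlinarith [norm_nonneg (sphCoord θ φ)]

theorem aux_sph_surj (x : EuclideanSpace ℝ (Fin 3)) (hx : ‖x‖ = 1) :
    ∃ θ ∈ Set.Icc (-(Real.pi / 2)) (Real.pi / 2), ∃ φ : ℝ, sphCoord θ φ = x := by
  have hn : x 0 ^ 2 + x 1 ^ 2 + x 2 ^ 2 = 1 := by
    have : ‖x‖ ^ 2 = x 0 ^ 2 + x 1 ^ 2 + x 2 ^ 2 := by
      rw [EuclideanSpace.norm_sq_eq]; simp [Fin.sum_univ_three]
    rw [← this, hx]; norm_num
  set z : ℂ := ⟨x 0, x 1⟩ with hz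
  have hcos : Real.cos (Real.arcsin (x 2)) = ‖z‖ := by
    rw [Real.cos_arcsin, Complex.norm_eq_sqrt_sq_add_sq]
    congr 1
    simp only [hz]
    linarith
  refine ⟨Real.arcsin (x 2), Real.arcsin_mem_Icc _, Complex.arg z, ?_⟩
  ext i
  fin_cases i
  · simp [sphCoord, hcos, Complex.norm_mul_cos_arg, hz]
  · simp [sphCoord, hcos, Complex.norm_mul_sin_arg, hz]
  · simp [sphCoord]
    rw [Real.sin_arcsin] <;> nlinarith [sq_nonneg (x 0), sq_nonneg (x 1)]

theorem aux_radial_diff (v : EuclideanSpace ℝ (Fin 3) → ℝ) (hv : ContDiffOn ℝ 1 v closedExt)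
    (θ φ : ℝ) :
    DifferentiableWithinAt ℝ (fun r : ℝ => v (r • sphCoord θ φ)) (Set.Ici 1) 1 := by
  have hd : DifferentiableOn ℝ v closedExt := hv.differentiableOn (by norm_num)
  have h1 : DifferentiableOn ℝ (fun r : ℝ => r • sphCoord θ φ) (Set.Ici 1) := by fun_prop
  refine (hd.comp h1 ?_) 1 (by simp)
  intro r hr
  have hr' : (1 : ℝ) ≤ r := hr
  show 1 ≤ ‖r • sphCoord θ φ‖
  rw [norm_smul, aux_norm_sph, mul_one, Real.norm_eq_abs]
  exact hr'.trans (le_abs_self r)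

theorem aux_sph_diff (φ : ℝ) : Differentiable ℝ (fun t => sphCoord t φ) := by
  unfold sphCoord
  rw [differentiable_euclidean]
  intro i
  fin_cases i <;> simp <;> fun_prop

theorem aux_theta_diff (v : EuclideanSpace ℝ (Fin 3) → ℝ) (hv : ContDiffOn ℝ 1 v closedExt)
    (θ φ : ℝ) : DifferentiableAt ℝ (fun t => v (sphCoord t φ)) θ := by
  have hd : DifferentiableOn ℝ v closedExt := hv.differentiableOn (by norm_num)
  have h := hd.comp (s := Set.univ) (aux_sph_diff φ).differentiableOn
    (fun t _ => (aux_norm_sph t φ).ge)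
  exact (differentiableOn_univ.1 h) θ

theorem aux_nonpos (v : EuclideanSpace ℝ (Fin 3) → ℝ) (hv : ContDiffOn ℝ 2 v extDomain)
    (hc1 : ContDiffOn ℝ 1 v closedExt) (hl : ∀ x ∈ extDomain, lap v x = 0)
    (hob : ∀ θ ∈ Set.Icc (-(Real.pi / 2)) (Real.pi / 2), ∀ φ : ℝ,
      -2 * Real.sin θ * radialDeriv v θ φ + Real.cos θ * thetaDeriv v θ φ = 0)
    (ht : Tendsto v (Bornology.cobounded _) (nhds 0))
    (he : ∀ φ : ℝ, v (sphCoord 0 φ) = 0) : ∀ x ∈ closedExt, v x ≤ 0 := by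
  have hc := hc1.continuousOn
  have hcomp := aux_compare v hv hc hl ht
  have hsub : Metric.sphere (0 : EuclideanSpace ℝ (Fin 3)) 1 ⊆ closedExt := by
    intro x hx
    exact (mem_sphere_zero_iff_norm.1 hx).ge
  obtain ⟨x0, hx0, hmax⟩ := (isCompact_sphere (0 : EuclideanSpace ℝ (Fin 3)) 1).exists_isMaxOn
    ⟨sphCoord 0 0, mem_sphere_zero_iff_norm.2 (aux_norm_sph 0 0)⟩ (hc.mono hsub)
  have hmax' : ∀ x, ‖x‖ = 1 → v x ≤ v x0 := fun x hx => hmax (mem_sphere_zero_iff_norm.2 hx)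
  have hM : v x0 ≤ 0 := by
    by_contra hM
    push Not at hM
    obtain ⟨θ, hθ, φ, rfl⟩ := aux_sph_surj x0 (mem_sphere_zero_iff_norm.1 hx0)
    have hθd : thetaDeriv v θ φ = 0 := by
      apply IsLocalMax.deriv_eq_zero
      exact Eventually.of_forall fun t => hmax' _ (aux_norm_sph t φ)
    have hsin : Real.sin θ ≠ 0 := by
      intro h0
      have : θ = 0 := by
        rw [Real.sin_eq_zero_iff_of_lt_of_lt] at h0
        · exact h0
        · linarith [hθ.1, Real.pi_pos]
        · linarith [hθ.2, Real.pi_pos]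
      rw [this, he] at hM
      exact lt_irrefl _ hM
    have hr : radialDeriv v θ φ = 0 := by
      have := hob θ hθ φ
      rw [hθd] at this
      simpa [hsin] using this
    set M := v (sphCoord θ φ) with hMdef
    have hcmp := hcomp M hM hmax'
    have hvr : HasDerivWithinAt (fun r : ℝ => v (r • sphCoord θ φ)) 0 (Set.Ici 1) 1 := by
      have := (aux_radial_diff v hc1 θ φ).hasDerivWithinAt
      rw [← hr]; exact this
    have hbr : HasDerivAt (fun r : ℝ => M * (r ^ 2) ^ (-(1 / 4) : ℝ)) (-(M / 2)) 1 := by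
      have := (((hasDerivAt_id (1 : ℝ)).pow 2).rpow_const (p := (-(1 / 4) : ℝ))
        (Or.inl (by norm_num))).const_mul M
      refine this.congr_deriv ?_
      simp
      ring
    have hg := hvr.sub hbr.hasDerivWithinAt
    have hloc : IsLocalMaxOn ((fun r : ℝ => v (r • sphCoord θ φ)) -
        fun r : ℝ => M * (r ^ 2) ^ (-(1 / 4) : ℝ)) (Set.Ici 1) 1 := by
      filter_upwards [self_mem_nhdsWithin] with r hr
      have hr' : (1 : ℝ) ≤ r := hr
      have hnr : ‖r • sphCoord θ φ‖ = r := by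
        rw [norm_smul, aux_norm_sph, mul_one, Real.norm_eq_abs, abs_of_nonneg (by linarith)]
      have := hcmp (r • sphCoord θ φ) (by show 1 ≤ ‖r • sphCoord θ φ‖; rw [hnr]; exact hr')
      unfold auxB at this
      rw [hnr] at this
      simp only [Pi.sub_apply, one_smul, ← hMdef]
      simp
      norm_num at this
      linarith
    have := hloc.hasFDerivWithinAt_nonpos (y := (1 : ℝ)) hg.hasFDerivWithinAt
      (mem_posTangentConeAt_of_segment_subset (by
        rw [segment_eq_Icc (by norm_num)]
        exact Set.Icc_subset_Ici_self))
    simp at this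
    linarith
  intro x hx
  apply le_of_forall_pos_le_add
  intro ε hε
  have h := hcomp ε hε (fun y hy => (hmax' y hy).trans (hM.trans hε.le)) x hx
  have h2 : auxB ε x ≤ ε := by
    unfold auxB
    have hx' : 1 ≤ ‖x‖ := hx
    have : (‖x‖ ^ 2) ^ (-(1 / 4) : ℝ) ≤ 1 :=
      Real.rpow_le_one_of_one_le_of_nonpos (by nlinarith) (by norm_num)
    nlinarith
  linarith

theorem aux_sub_le (v₁ v₂ : EuclideanSpace ℝ (Fin 3) → ℝ) (f : ℝ → ℝ → ℝ) (h : ℝ → ℝ)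
    (h₁ : SolvesObliqueR v₁ f h) (h₂ : SolvesObliqueR v₂ f h) :
    ∀ x ∈ closedExt, v₁ x ≤ v₂ x := by
  obtain ⟨a1, b1, c1, d1, e1, g1⟩ := h₁
  obtain ⟨a2, b2, c2, d2, e2, g2⟩ := h₂
  have := aux_nonpos (fun x => v₁ x - v₂ x) (a1.sub a2) (b1.sub b2) ?_ ?_
    (by simpa using e1.sub e2) (fun φ => by simp [g1, g2])
  · intro x hx
    linarith [this x hx]
  · intro x hx
    have hl1 := c1 x hx
    have hl2 := c2 x hx
    unfold lap at *
    rw [← sub_zero (0 : ℝ)]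
    nth_rewrite 1 [← hl1]
    rw [← hl2, ← Finset.sum_sub_distrib]
    refine Finset.sum_congr rfl fun i _ => ?_
    have hev : (fun y => fderiv ℝ (fun x => v₁ x - v₂ x) y (EuclideanSpace.single i (1 : ℝ)))
        =ᶠ[nhds x] fun y => fderiv ℝ v₁ y (EuclideanSpace.single i (1 : ℝ)) -
          fderiv ℝ v₂ y (EuclideanSpace.single i (1 : ℝ)) := by
      filter_upwards [aux_isOpen_ext.mem_nhds hx] with y hy
      rw [fderiv_fun_sub ((a1.contDiffAt (aux_isOpen_ext.mem_nhds hy)).differentiableAt (by norm_num))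
        ((a2.contDiffAt (aux_isOpen_ext.mem_nhds hy)).differentiableAt (by norm_num))]
      rfl
    rw [hev.fderiv_eq, fderiv_fun_sub (aux_fderiv_diff v₁ a1 x _ hx) (aux_fderiv_diff v₂ a2 x _ hx)]
    rfl
  · intro θ hθ φ
    have hr : radialDeriv (fun x => v₁ x - v₂ x) θ φ = radialDeriv v₁ θ φ - radialDeriv v₂ θ φ :=
      derivWithin_fun_sub (aux_radial_diff v₁ b1 θ φ) (aux_radial_diff v₂ b2 θ φ)
    have ht : thetaDeriv (fun x => v₁ x - v₂ x) θ φ = thetaDeriv v₁ θ φ - thetaDeriv v₂ θ φ :=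
      deriv_fun_sub (aux_theta_diff v₁ b1 θ φ) (aux_theta_diff v₂ b2 θ φ)
    rw [hr, ht]
    linarith [d1 θ hθ φ, d2 θ hθ φ]

/-- Lemma 3.5: uniqueness for the linearized oblique derivative
problem. Two classical solutions of `Δv = 0` in `Ω`, `∇d⋅∇v = f/2` on `𝕊`,
`v → 0` at infinity, `v = h` on the equator, coincide on `cl Ω`. -/
theorem oblique_problem_uniqueness
    (v₁ v₂ : EuclideanSpace ℝ (Fin 3) → ℝ) (f : ℝ → ℝ → ℝ) (h : ℝ → ℝ)
    (h₁ : SolvesObliqueR v₁ f h) (h₂ : SolvesObliqueR v₂ f h) :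
    Set.EqOn v₁ v₂ closedExt := by
  intro x hx
  exact le_antisymm (aux_sub_le v₁ v₂ f h h₁ h₂ x hx) (aux_sub_le v₂ v₁ f h h₂ h₁ x hx)

end
end

section
/- There are positive constants c and C such that for all natural numbers n: c (n+1)^{1/4} ≤ n!!/√(n!) ≤ C (n+1)^{1/4} and c √(n+1) ≤ (n+1)!!/n!! ≤ C √(n+1). -/
noncomputable section

open MeasureTheory Real Filter

theorem dfact_sq_aux {a b : ℝ} (h : a ^ 2 ≤ b ^ 2) (hb : 0 ≤ b) : a ≤ b := by
  by_contra! hc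
  nlinarith

theorem dfact_ub : ∀ n : ℕ, (Nat.doubleFactorial (n + 1)) ^ 2 ≤
    2 * (n + 1) * (Nat.doubleFactorial n) ^ 2
  | 0 => by simp [Nat.doubleFactorial]
  | 1 => by simp [Nat.doubleFactorial]
  | n + 2 => by
    have ih := dfact_ub n
    have h1 : Nat.doubleFactorial (n + 2 + 1) = (n + 3) * Nat.doubleFactorial (n + 1) :=
      Nat.doubleFactorial_add_two (n + 1)
    rw [h1, Nat.doubleFactorial_add_two n, mul_pow, mul_pow]
    calc (n + 3) ^ 2 * Nat.doubleFactorial (n + 1) ^ 2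
        ≤ (n + 3) ^ 2 * (2 * (n + 1) * (Nat.doubleFactorial n) ^ 2) := by gcongr
      _ = (2 * (n + 3) * Nat.doubleFactorial n ^ 2) * ((n + 3) * (n + 1)) := by ring
      _ ≤ (2 * (n + 3) * Nat.doubleFactorial n ^ 2) * ((n + 2) ^ 2) := by
        gcongr
        nlinarith
      _ = 2 * (n + 2 + 1) * ((n + 2) ^ 2 * Nat.doubleFactorial n ^ 2) := by ring

theorem dfact_lb (n : ℕ) : (n + 2) * (Nat.doubleFactorial n) ^ 2 ≤
    2 * (Nat.doubleFactorial (n + 1)) ^ 2 := by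
  have h := dfact_ub (n + 1)
  rw [show n + 1 + 1 = n + 2 from rfl, Nat.doubleFactorial_add_two, mul_pow] at h
  have h2 : (n + 2) * ((n + 2) * (Nat.doubleFactorial n) ^ 2) ≤
      (n + 2) * (2 * (Nat.doubleFactorial (n + 1)) ^ 2) := by
    nlinarith
  exact Nat.le_of_mul_le_mul_left h2 (by omega)

/-- Lemma A.1: double factorial asymptotics.
There are `c, C > 0` such that for all `n`:
`c (n+1)^{1/4} ≤ n‼/√(n!) ≤ C (n+1)^{1/4}` and
`c √(n+1) ≤ (n+1)‼/n‼ ≤ C √(n+1)`. -/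
theorem double_factorial_bounds :
    ∃ c > 0, ∃ C > 0, ∀ n : ℕ,
      (c * ((n : ℝ) + 1) ^ ((1 : ℝ) / 4) ≤
          (Nat.doubleFactorial n : ℝ) / Real.sqrt (Nat.factorial n) ∧
        (Nat.doubleFactorial n : ℝ) / Real.sqrt (Nat.factorial n) ≤
          C * ((n : ℝ) + 1) ^ ((1 : ℝ) / 4)) ∧
      (c * Real.sqrt ((n : ℝ) + 1) ≤
          (Nat.doubleFactorial (n + 1) : ℝ) / (Nat.doubleFactorial n : ℝ) ∧
        (Nat.doubleFactorial (n + 1) : ℝ) / (Nat.doubleFactorial n : ℝ) ≤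
          C * Real.sqrt ((n : ℝ) + 1)) := by
  refine ⟨1 / 2, by norm_num, 2, by norm_num, fun n => ?_⟩
  have hD : (0 : ℝ) < Nat.doubleFactorial n := by exact_mod_cast Nat.doubleFactorial_pos n
  have hE : (0 : ℝ) < Nat.doubleFactorial (n + 1) := by
    exact_mod_cast Nat.doubleFactorial_pos (n + 1)
  have hF : (0 : ℝ) < Nat.factorial n := by exact_mod_cast Nat.factorial_pos n
  have hEDF : ((n : ℝ) + 1) * Nat.factorial n =
      Nat.doubleFactorial (n + 1) * Nat.doubleFactorial n := by
    have := Nat.factorial_eq_mul_doubleFactorial n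
    rw [Nat.factorial_succ] at this
    exact_mod_cast this
  have hub : (Nat.doubleFactorial (n + 1) : ℝ) ^ 2 ≤
      2 * ((n : ℝ) + 1) * (Nat.doubleFactorial n : ℝ) ^ 2 := by exact_mod_cast dfact_ub n
  have hlb : ((n : ℝ) + 2) * (Nat.doubleFactorial n : ℝ) ^ 2 ≤
      2 * (Nat.doubleFactorial (n + 1) : ℝ) ^ 2 := by exact_mod_cast dfact_lb n
  have hn : (0 : ℝ) < (n : ℝ) + 1 := by positivity
  have hs : 0 < Real.sqrt ((n : ℝ) + 1) := Real.sqrt_pos.2 hn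
  have hs2 : Real.sqrt ((n : ℝ) + 1) ^ 2 = (n : ℝ) + 1 := Real.sq_sqrt hn.le
  have ht : 0 < ((n : ℝ) + 1) ^ ((1 : ℝ) / 4) := Real.rpow_pos_of_pos hn _
  have ht2 : (((n : ℝ) + 1) ^ ((1 : ℝ) / 4)) ^ 2 = Real.sqrt ((n : ℝ) + 1) := by
    rw [Real.sqrt_eq_rpow, ← Real.rpow_natCast, ← Real.rpow_mul hn.le]
    norm_num
  have hf : 0 < Real.sqrt (Nat.factorial n : ℝ) := Real.sqrt_pos.2 hF
  have hf2 : Real.sqrt (Nat.factorial n : ℝ) ^ 2 = Nat.factorial n := Real.sq_sqrt hF.le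
  generalize (Nat.doubleFactorial n : ℝ) = D at *
  generalize (Nat.doubleFactorial (n + 1) : ℝ) = E at *
  generalize Real.sqrt (Nat.factorial n : ℝ) = f at *
  generalize (Nat.factorial n : ℝ) = F at *
  generalize ((n : ℝ) + 1) ^ ((1 : ℝ) / 4) = t at *
  generalize Real.sqrt ((n : ℝ) + 1) = s at *
  have hE1 : E ≤ 2 * s * D := by
    refine dfact_sq_aux ?_ (by positivity)
    rw [mul_pow, mul_pow, hs2]
    nlinarith [mul_pos hn (pow_pos hD 2)]
  have hE2 : s * D ≤ 2 * E := by
    refine dfact_sq_aux ?_ (by positivity)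
    rw [mul_pow, mul_pow, hs2]
    nlinarith [pow_pos hD 2, pow_pos hE 2]
  rw [← hs2, ← hf2] at hEDF
  refine ⟨⟨?_, ?_⟩, ?_, ?_⟩
  · rw [le_div_iff₀ hf]
    refine dfact_sq_aux ?_ hD.le
    have : s * (s * f ^ 2) ≤ s * (2 * D ^ 2) := by
      nlinarith [mul_le_mul_of_nonneg_right hE1 hD.le]
    have := le_of_mul_le_mul_left this hs
    rw [mul_pow, mul_pow, ht2]
    nlinarith [pow_pos hD 2]
  · rw [div_le_iff₀ hf]
    refine dfact_sq_aux ?_ (by positivity)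
    have : s * D ^ 2 ≤ s * (2 * (s * f ^ 2)) := by
      nlinarith [mul_le_mul_of_nonneg_right hE2 hD.le]
    have := le_of_mul_le_mul_left this hs
    rw [mul_pow, mul_pow, ht2]
    nlinarith [mul_pos hs (pow_pos hf 2)]
  · rw [le_div_iff₀ hD]
    linarith
  · rw [div_le_iff₀ hD]
    exact hE1

end
end
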